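/- Let X be a tree and let f : X → X be a continuous map with zero topological entropy, and let ω_f(x) be an infinite ω-limit set of f. Then there are infinitely many points a ∈ ω_f(x) for which the intersection of all periodic arcs of f containing a is reduced to the singleton {a}. -/

import Mathlib

open Set Filter Topology Function
open scoped ENNReal

/-- A subset of a topological space is an *arc* if it is homeomorphic to `[0,1]`. -/
def IsArc {X : Type*} [TopologicalSpace X] (A : Set X) : Prop :=
  Nonempty (A ≃ₜ Set.Icc (0 : ℝ) 1)

/-- A point `p` is an *endpoint* of the arc `A` if `p ∈ A` and `A \ {p}` is connected. -/
def IsArcEndpoint {X : Type*} [TopologicalSpace X] (A : Set X) (p : X) : Prop :=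
  p ∈ A ∧ IsConnected (A \ {p})

/-- A subset is a *simple closed curve* if it is homeomorphic to the unit circle. -/
def IsSimpleClosedCurve {X : Type*} [TopologicalSpace X] (S : Set X) : Prop :=
  Nonempty (S ≃ₜ Metric.sphere (0 : ℂ) 1)

/-- A *tree* is a compact connected metric space which is a union of finitely many arcs,
any two of which are disjoint or intersect only in (one or both of) their endpoints,
and which contains no simple closed curve. -/
def IsTree (X : Type*) [MetricSpace X] : Prop :=
  CompactSpace X ∧ ConnectedSpace X ∧
    (∃ 𝒜 : Finset (Set X), (∀ A ∈ 𝒜, IsArc A) ∧ ⋃₀ (𝒜 : Set (Set X)) = Set.univ ∧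
      ∀ A ∈ 𝒜, ∀ B ∈ 𝒜, A ≠ B → ∀ p ∈ A ∩ B, IsArcEndpoint A p ∧ IsArcEndpoint B p) ∧
    ∀ S : Set X, ¬ IsSimpleClosedCurve S

/-- A *dendrite* is a locally connected continuum containing no simple closed curve. -/
def IsDendrite (X : Type*) [MetricSpace X] : Prop :=
  CompactSpace X ∧ ConnectedSpace X ∧ LocallyConnectedSpace X ∧
    ∀ S : Set X, ¬ IsSimpleClosedCurve S

/-- `𝒰` is a finite open cover of the subset `Y`. -/
def IsOpenCoverOn {X : Type*} [TopologicalSpace X] (Y : Set X) (𝒰 : Finset (Set X)) : Prop :=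
  (∀ U ∈ 𝒰, IsOpen U) ∧ Y ⊆ ⋃₀ (𝒰 : Set (Set X))

/-- `N(⋁_{i=1}^n f^{-a_i}(𝒰))`, relative to the subset `Y`: the minimal number `m` of elements
of the join cover `⋁_{i=1}^n f^{-a_i}(𝒰)` needed to cover `Y`. -/
noncomputable def seqCoverCountOn {X : Type*} (f : X → X) (Y : Set X) (a : ℕ → ℕ)
    (𝒰 : Finset (Set X)) (n : ℕ) : ℕ :=
  sInf { m | ∃ c : Fin m → Fin n → Set X, (∀ j i, c j i ∈ 𝒰) ∧
    Y ⊆ ⋃ j, ⋂ i, f^[a i.1] ⁻¹' c j i }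

/-- Topological sequence entropy of `f` restricted to the (invariant) subset `Y`,
with respect to the sequence `a`. -/
noncomputable def seqEntropyOn {X : Type*} [TopologicalSpace X] (f : X → X) (Y : Set X)
    (a : ℕ → ℕ) : ℝ≥0∞ :=
  ⨆ (𝒰 : Finset (Set X)) (_ : IsOpenCoverOn Y 𝒰),
    Filter.limsup
      (fun n : ℕ => ENNReal.ofReal (Real.log (seqCoverCountOn f Y a 𝒰 n) / n)) Filter.atTop

/-- Topological sequence entropy of `f : X → X` with respect to the sequence `a`. -/
noncomputable def seqEntropy {X : Type*} [TopologicalSpace X] (f : X → X) (a : ℕ → ℕ) : ℝ≥0∞ :=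
  seqEntropyOn f Set.univ a

/-- The ordinary topological entropy `h(f)`, i.e. the sequence entropy for `A = (0,1,2,…)`. -/
noncomputable def topEntropy {X : Type*} [TopologicalSpace X] (f : X → X) : ℝ≥0∞ :=
  seqEntropy f id

/-- `h_∞(f|_Y)`: the supremum over all strictly increasing sequences of positive integers of
the topological sequence entropies of `f` restricted to `Y`. -/
noncomputable def supSeqEntropyOn {X : Type*} [TopologicalSpace X] (f : X → X) (Y : Set X) :
    ℝ≥0∞ :=
  ⨆ (a : ℕ → ℕ) (_ : StrictMono a) (_ : 1 ≤ a 0), seqEntropyOn f Y a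

/-- `h_∞(f)`: the supremum of the topological sequence entropies of `f`. -/
noncomputable def supSeqEntropy {X : Type*} [TopologicalSpace X] (f : X → X) : ℝ≥0∞ :=
  supSeqEntropyOn f Set.univ

/-- The ω-limit set `ω_f(x) = ⋂_n closure {f^k(x) : k ≥ n}`. -/
def omegaLimitSet {X : Type*} [TopologicalSpace X] (f : X → X) (x : X) : Set X :=
  ⋂ n : ℕ, closure ((fun k => f^[k] x) '' Set.Ici n)

/-- `ω(f) = ⋃_x ω_f(x)`. -/
def omegaSet {X : Type*} [TopologicalSpace X] (f : X → X) : Set X :=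
  ⋃ x : X, omegaLimitSet f x

/-- The non-wandering set `Ω(f)`. -/
def nonWanderingSet {X : Type*} [TopologicalSpace X] (f : X → X) : Set X :=
  { x | ∀ U : Set X, IsOpen U → x ∈ U → ∃ n, 1 ≤ n ∧ (f^[n] ⁻¹' U ∩ U).Nonempty }

/-- There is an ε-chain from `x` to `y` under `f`. -/
def EpsChain {X : Type*} [MetricSpace X] (f : X → X) (ε : ℝ) (x y : X) : Prop :=
  ∃ n, 1 ≤ n ∧ ∃ c : ℕ → X, c 0 = x ∧ c n = y ∧ ∀ i < n, dist (f (c i)) (c (i + 1)) < ε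

/-- The chain recurrent set `CR(f)`. -/
def chainRecurrentSet {X : Type*} [MetricSpace X] (f : X → X) : Set X :=
  { x | ∀ ε > 0, EpsChain f ε x x }

/-- The chain recurrent set of the restriction `f|_Y`: chain recurrence witnessed by
ε-chains lying entirely inside `Y`. -/
def chainRecurrentSetOn {X : Type*} [MetricSpace X] (f : X → X) (Y : Set X) : Set X :=
  { x ∈ Y | ∀ ε > 0, ∃ n, 1 ≤ n ∧ ∃ c : ℕ → X, c 0 = x ∧ c n = x ∧
      (∀ i ≤ n, c i ∈ Y) ∧ ∀ i < n, dist (f (c i)) (c (i + 1)) < ε }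

/-- `I` is a periodic arc of `f` of period `s`: an arc with `f^s(I) ⊆ I` whose iterates
`I, f(I), …, f^{s-1}(I)` are pairwise disjoint. -/
def IsPeriodicArc {X : Type*} [TopologicalSpace X] (f : X → X) (I : Set X) (s : ℕ) : Prop :=
  IsArc I ∧ 1 ≤ s ∧ Set.MapsTo f^[s] I I ∧
    ∀ i j, i < j → j < s → Disjoint (f^[i] '' I) (f^[j] '' I)

/-- `Orb_f(I) = I ∪ f(I) ∪ … ∪ f^{s-1}(I)`. -/
def arcOrbit {X : Type*} (f : X → X) (I : Set X) (s : ℕ) : Set X :=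
  ⋃ i ∈ Finset.range s, f^[i] '' I

/-- `I` is an independence set for the pair `(U, V)` under `f`. -/
def IsIndepSetPair {X : Type*} (f : X → X) (U V : Set X) (I : Finset ℕ) : Prop :=
  ∀ J ⊆ I, J.Nonempty → ∀ s : ℕ → Bool,
    (⋂ j ∈ J, f^[j] ⁻¹' (if s j then U else V)).Nonempty

/-- `(x, y)` is an IN-pair of `(X, f)`. -/
def INPair {X : Type*} [TopologicalSpace X] (f : X → X) (x y : X) : Prop :=
  ∀ U ∈ nhds x, ∀ V ∈ nhds y, ∀ m : ℕ, ∃ I : Finset ℕ, m ≤ I.card ∧ IsIndepSetPair f U V I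

/-- The set `IN(X, f)` of IN-pairs of `(X, f)`. -/
def INPairs {X : Type*} [TopologicalSpace X] (f : X → X) : Set (X × X) :=
  { p | INPair f p.1 p.2 }

/-- `(x, y)` is an IN-pair of the restricted (sub)system `(Y, f|_Y)`, for `Y` invariant. -/
def INPairOn {X : Type*} [TopologicalSpace X] (f : X → X) (Y : Set X) (x y : X) : Prop :=
  x ∈ Y ∧ y ∈ Y ∧ ∀ U ∈ nhds x, ∀ V ∈ nhds y, ∀ m : ℕ, ∃ I : Finset ℕ, m ≤ I.card ∧
    ∀ J ⊆ I, J.Nonempty → ∀ s : ℕ → Bool,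
      (Y ∩ ⋂ j ∈ J, f^[j] ⁻¹' (if s j then U else V)).Nonempty

/-- `(x, y)` is a Li–Yorke pair for `f`. -/
def LiYorkePair {X : Type*} [MetricSpace X] (f : X → X) (x y : X) : Prop :=
  Filter.liminf (fun n : ℕ => dist (f^[n] x) (f^[n] y)) Filter.atTop = 0 ∧
    0 < Filter.limsup (fun n : ℕ => dist (f^[n] x) (f^[n] y)) Filter.atTop

/-!
Zero entropy excludes horseshoes. If every connected set mapped into itself by an iterate of `f` and
visited by the orbit of `x` absorbed that orbit, then periodic points interlaced with `ω_f(x)` in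
one edge would have small neighbourhoods growing over each other, which is a horseshoe. So some
such set is visited without absorbing the orbit, and iterating this, the orbit visits connected
sets `P` at times in a single residue class, for arbitrarily large moduli. The images of `P` may
touch, but at most `2 * #edges` of them lie in one component of their union: any one of these can be
avoided by a connected set containing the orbit points of all the others. So `x` is absorbed by
arbitrarily long cycles of disjoint closed connected sets.

In a cycle at most `2 * #edges` members meet an edge without being contained in it; every other
member is a periodic arc. Inside such an arc, longer cycles have members of arbitrarily small
length, because disjoint segments of an edge have bounded total length. Nesting them yields a point
of `ω_f(x)` in that arc at which the periodic arcs shrink to a point, and the number of arcs is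
unbounded.
-/

/-- A *horseshoe* of `f` at time `n`: two disjoint nonempty closed sets, indexed by the two
letters, each of which is stretched by `f^[n]` across both. -/
structure IsHorseshoe {X : Type*} [TopologicalSpace X] (f : X → X) (n : ℕ) (S : Bool → Set X) :
    Prop where
  pos : 0 < n
  isClosed : ∀ b, IsClosed (S b)
  nonempty : ∀ b, (S b).Nonempty
  disjoint : Disjoint (S true) (S false)
  subset_image : ∀ b b', S b' ⊆ f^[n] '' S b

/-- Some iterate of `f` has a horseshoe. -/
def HasHorseshoe {X : Type*} [TopologicalSpace X] (f : X → X) : Prop :=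
  ∃ n S, IsHorseshoe f n S

theorem exists_itinerary {X ι : Type*} {f : X → X} {n : ℕ} {S : ι → Set X}
    (hne : ∀ b, (S b).Nonempty) (hS : ∀ b b', S b' ⊆ f^[n] '' S b) (k : ℕ) (w : ℕ → ι) :
    ∃ z, ∀ i ≤ k, f^[i * n] z ∈ S (w i) := by
  induction k generalizing w with
  | zero =>
    obtain ⟨z, hz⟩ := hne (w 0)
    refine ⟨z, fun i hi => ?_⟩
    obtain rfl : i = 0 := by omega
    simpa using hz
  | succ k ih =>
    obtain ⟨z', hz'⟩ := ih fun i => w (i + 1)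
    obtain ⟨z, hz, rfl⟩ := hS (w 0) (w 1) (by simpa using hz' 0 k.zero_le)
    refine ⟨z, fun i hi => ?_⟩
    rcases i with _ | i
    · simpa using hz
    · rw [Nat.succ_mul, iterate_add_apply]
      exact hz' i (by omega)

theorem exists_subcover_card_eq_seqCoverCountOn {X : Type*} {f : X → X} {Y : Set X} {a : ℕ → ℕ}
    {𝒰 : Finset (Set X)} {n : ℕ} (h𝒰 : ∀ y, ∃ U ∈ 𝒰, y ∈ U) :
    ∃ c : Fin (seqCoverCountOn f Y a 𝒰 n) → Fin n → Set X, (∀ j i, c j i ∈ 𝒰) ∧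
      Y ⊆ ⋃ j, ⋂ i, f^[a i.1] ⁻¹' c j i := by
  classical
  suffices hne : { m | ∃ c : Fin m → Fin n → Set X, (∀ j i, c j i ∈ 𝒰) ∧
    Y ⊆ ⋃ j, ⋂ i, f^[a i.1] ⁻¹' c j i }.Nonempty from Nat.sInf_mem hne
  let T := Fin n → 𝒰
  refine ⟨Fintype.card T, fun j i => ((Fintype.equivFin T).symm j i : Set X),
    fun j i => Subtype.prop _, fun y _ => ?_⟩
  choose U hU hyU using fun i : Fin n => h𝒰 (f^[a i.1] y)
  exact mem_iUnion.2 ⟨Fintype.equivFin T fun i => ⟨U i, hU i⟩,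
    mem_iInter.2 fun i => by simpa using hyU i⟩

namespace IsHorseshoe

variable {X : Type*} [TopologicalSpace X] {f : X → X} {n : ℕ} {S : Bool → Set X}

theorem notMem_of_ne (h : IsHorseshoe f n S) {b b' : Bool} (hb : b ≠ b') {y : X} (hy : y ∈ S b) :
    y ∉ S b' := by
  cases b <;> cases b'
  exacts [absurd rfl hb, h.disjoint.notMem_of_mem_right hy, h.disjoint.notMem_of_mem_left hy,
    absurd rfl hb]

theorem isOpenCoverOn_compl [DecidableEq (Set X)] (h : IsHorseshoe f n S) :
    IsOpenCoverOn univ {(S true)ᶜ, (S false)ᶜ} := by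
  refine ⟨?_, fun y _ => ?_⟩
  · simp only [Finset.mem_insert, Finset.mem_singleton, forall_eq_or_imp, forall_eq]
    exact ⟨(h.isClosed true).isOpen_compl, (h.isClosed false).isOpen_compl⟩
  · by_cases hy : y ∈ S true
    · exact ⟨(S false)ᶜ, by simp, h.notMem_of_ne (by decide) hy⟩
    · exact ⟨(S true)ᶜ, by simp, hy⟩

/-- Each member of the cover misses one of the two sets, so points with different itineraries lie
in different members of the joined cover. -/
theorem two_pow_le_seqCoverCountOn [DecidableEq (Set X)] (h : IsHorseshoe f n S) (k : ℕ) :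
    2 ^ k ≤ seqCoverCountOn f univ id {(S true)ᶜ, (S false)ᶜ} (k * n) := by
  obtain ⟨c, hc, hcover⟩ := exists_subcover_card_eq_seqCoverCountOn (f := f) (Y := univ) (a := id)
    (n := k * n) fun y => h.isOpenCoverOn_compl.2 (mem_univ y)
  have hword (w : Fin k → Bool) : ∃ z, ∀ i : Fin k, f^[i * n] z ∈ S (w i) := by
    obtain ⟨z, hz⟩ := exists_itinerary h.nonempty h.subset_image k
      fun i => if hi : i < k then w ⟨i, hi⟩ else true
    exact ⟨z, fun i => by simpa using hz i i.2.le⟩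
  choose z hz using hword
  choose j hj using fun w => mem_iUnion.1 (hcover (mem_univ (z w)))
  have hj_inj : Injective j := by
    intro w w' hww'
    funext i
    by_contra hne
    have hlt : i.1 * n < k * n := Nat.mul_lt_mul_of_pos_right i.2 h.pos
    have hmem : f^[i * n] (z w) ∈ c (j w) ⟨i * n, hlt⟩ := mem_iInter.1 (hj w) _
    have hmem' : f^[i * n] (z w') ∈ c (j w) ⟨i * n, hlt⟩ := hww' ▸ mem_iInter.1 (hj w') _
    obtain ⟨b, hb⟩ : ∃ b, c (j w) ⟨i * n, hlt⟩ = (S b)ᶜ := by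
      have := hc (j w) ⟨i * n, hlt⟩
      rw [Finset.mem_insert, Finset.mem_singleton] at this
      exact this.elim (⟨true, ·⟩) (⟨false, ·⟩)
    rw [hb] at hmem hmem'
    have hw : w i ≠ b := fun e => hmem (e ▸ hz w i)
    have hw' : w' i ≠ b := fun e => hmem' (e ▸ hz w' i)
    exact hne (by cases b <;> simp_all)
  simpa using Fintype.card_le_of_injective j hj_inj

theorem log_two_div_le_topEntropy (h : IsHorseshoe f n S) :
    ENNReal.ofReal (Real.log 2 / n) ≤ topEntropy f := by
  classical
  refine le_trans (le_limsup_of_frequently_le (frequently_atTop.2 fun N => ?_))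
    (le_iSup₂ (f := fun (𝒰 : Finset (Set X)) (_ : IsOpenCoverOn univ 𝒰) => limsup
      (fun k : ℕ => ENNReal.ofReal (Real.log (seqCoverCountOn f univ id 𝒰 k) / k)) atTop)
      _ h.isOpenCoverOn_compl)
  refine ⟨(N + 1) * n, by nlinarith [h.pos], ENNReal.ofReal_le_ofReal ?_⟩
  have hn : (0 : ℝ) < n := by exact_mod_cast h.pos
  have hlog := Real.log_le_log (by positivity)
    (by exact_mod_cast h.two_pow_le_seqCoverCountOn (N + 1) :
      (2 : ℝ) ^ (N + 1) ≤ seqCoverCountOn f univ id {(S true)ᶜ, (S false)ᶜ} ((N + 1) * n))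
  rw [Real.log_pow] at hlog
  calc Real.log 2 / n = (N + 1 : ℕ) * Real.log 2 / ((N + 1) * n : ℕ) := by
        push_cast; field_simp
    _ ≤ _ := by gcongr

end IsHorseshoe

section

variable {X : Type*} [TopologicalSpace X] {f : X → X}

theorem not_hasHorseshoe_of_topEntropy_eq_zero (h0 : topEntropy f = 0) : ¬ HasHorseshoe f := by
  rintro ⟨n, S, h⟩
  have hn : (0 : ℝ) < n := by exact_mod_cast h.pos
  have hpos : 0 < ENNReal.ofReal (Real.log 2 / n) :=
    ENNReal.ofReal_pos.2 (div_pos (Real.log_pos one_lt_two) hn)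
  exact (hpos.trans_le h.log_two_div_le_topEntropy).ne' h0

theorem HasHorseshoe.of_iterate {k : ℕ} (hk : 0 < k) : HasHorseshoe f^[k] → HasHorseshoe f
  | ⟨n, S, h⟩ => ⟨k * n, S, Nat.mul_pos hk h.pos, h.isClosed, h.nonempty, h.disjoint,
      fun b b' => by simpa only [iterate_mul] using h.subset_image b b'⟩

end

section Arcs

variable {X : Type*} [TopologicalSpace X] {Y : Set X} {a b c : X}

/-- Two points are *arc-joined* in `Y` if they are equal or the endpoints of an injective path
in `Y`. -/
def ArcJoinedIn (Y : Set X) (a b : X) : Prop :=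
  a = b ∨ ∃ γ : Path a b, Injective γ ∧ range γ ⊆ Y

theorem exists_eq_of_path_trans_eq {α : Path a b} {β : Path b c} (hα : Injective α)
    (hβ : Injective β) {u v : unitInterval} (huv : u < v) (h : (α.trans β) u = (α.trans β) v) :
    ∃ s t : unitInterval, α s = β t ∧ (s : ℝ) = 2 * u ∧ (t : ℝ) = 2 * v - 1 := by
  have huv' : (u : ℝ) < v := huv
  rw [Path.trans_apply, Path.trans_apply] at h
  split_ifs at h with hu hv hv
  · have := congr_arg Subtype.val (hα h)
    dsimp only at this
    linarith
  · exact ⟨_, _, h, rfl, rfl⟩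
  · linarith
  · have := congr_arg Subtype.val (hβ h)
    dsimp only at this
    linarith

theorem injective_path_trans {α : Path a b} {β : Path b c} (hα : Injective α) (hβ : Injective β)
    (h : ∀ s t, α s = β t → s = 1) : Injective (α.trans β) := by
  have hne : ∀ u v : unitInterval, u < v → (α.trans β) u ≠ (α.trans β) v := by
    intro u v huv e
    obtain ⟨s, t, hst, hs, ht⟩ := exists_eq_of_path_trans_eq hα hβ huv e
    obtain rfl := h s t hst
    obtain rfl : t = 0 := hβ (by rw [← hst, α.target, β.source])
    have huv' : (u : ℝ) < v := huv
    norm_num at hs ht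
    linarith
  intro u v e
  by_contra huv
  exact (lt_or_gt_of_ne huv).elim (hne u v · e) (hne v u · e.symm)

theorem injective_path_symm {γ : Path a b} (hγ : Injective γ) : Injective γ.symm :=
  hγ.comp unitInterval.symm_bijective.injective

theorem injective_subpath {γ : Path a b} (hγ : Injective γ) {s t : unitInterval} (hst : s ≠ t) :
    Injective (γ.subpath s t) := by
  intro u v huv
  have h : (1 - u : ℝ) * s + u * t = (1 - v) * s + v * t := congr_arg Subtype.val (hγ huv)
  have hst' : (t : ℝ) - s ≠ 0 := sub_ne_zero.2 fun e => hst (Subtype.ext e.symm)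
  exact Subtype.ext (mul_right_cancel₀ hst' (by linear_combination h))

namespace ArcJoinedIn

theorem of_path {γ : Path a b} (hγ : Injective γ) (hY : range γ ⊆ Y) (s t : unitInterval) :
    ArcJoinedIn Y (γ s) (γ t) := by
  rcases eq_or_ne s t with rfl | hst
  · exact Or.inl rfl
  · refine Or.inr ⟨γ.subpath s t, injective_subpath hγ hst, ?_⟩
    rw [Path.range_subpath]
    exact (image_subset_range _ _).trans hY

/-- Follow the first path only until it first meets the second one. -/
theorem trans [T2Space X] (hab : ArcJoinedIn Y a b) (hbc : ArcJoinedIn Y b c) :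
    ArcJoinedIn Y a c := by
  obtain rfl | ⟨α, hα, hαY⟩ := hab
  · exact hbc
  obtain rfl | ⟨β, hβ, hβY⟩ := hbc
  · exact Or.inr ⟨α, hα, hαY⟩
  obtain ⟨s₀, ⟨t₀, hst⟩, hmin⟩ : ∃ s₀, IsLeast {s | α s ∈ range β} s₀ :=
    ((isCompact_range β.continuous).isClosed.preimage α.continuous).isCompact.exists_isLeast
      ⟨1, 0, by rw [α.target, β.source]⟩
  rcases eq_or_ne 0 s₀ with rfl | hs₀
  · have h := of_path hβ hβY t₀ 1
    rwa [hst, α.source, β.target] at h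
  rcases eq_or_ne t₀ 1 with rfl | ht₀
  · have h := of_path hα hαY 0 s₀
    rwa [← hst, α.source, β.target] at h
  let α' := (α.subpath 0 s₀).cast α.source.symm rfl
  let β' := (β.subpath t₀ 1).cast hst.symm β.target.symm
  have hα' : Injective α' := injective_subpath hα hs₀
  have hβ' : Injective β' := injective_subpath hβ ht₀
  have hα'r : range α' ⊆ α '' uIcc 0 s₀ := (Path.range_subpath α 0 s₀).subset
  have hβ'r : range β' ⊆ range β :=
    (Path.range_subpath β t₀ 1).trans_subset (image_subset_range _ _)
  refine Or.inr ⟨α'.trans β', injective_path_trans hα' hβ' fun s t e => ?_, ?_⟩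
  · obtain ⟨s', hs', hs's⟩ := hα'r ⟨s, rfl⟩
    have hle : s₀ ≤ s' := hmin (show α s' ∈ range β by rw [hs's, e]; exact hβ'r ⟨t, rfl⟩)
    rw [uIcc_of_le unitInterval.nonneg'] at hs'
    exact hα' (by rw [← hs's, le_antisymm hs'.2 hle, α'.target])
  · rw [Path.trans_range]
    exact union_subset (hα'r.trans ((image_subset_range _ _).trans hαY)) (hβ'r.trans hβY)

end ArcJoinedIn

theorem exists_isSimpleClosedCurve_of_loop [T2Space X] (γ : Path a a)
    (hγ : ∀ u v, u < v → γ u = γ v → u = 0 ∧ v = 1) : ∃ S : Set X, IsSimpleClosedCurve S := by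
  have : Fact ((0 : ℝ) < 1) := ⟨one_pos⟩
  let g : AddCircle (1 : ℝ) → X := AddCircle.liftIco 1 0 γ.extend
  have hg : Continuous g := AddCircle.liftIco_zero_continuous (by simp)
    γ.continuous_extend.continuousOn
  have hg_apply (p : AddCircle (1 : ℝ)) : ∃ u : unitInterval, u < 1 ∧ p = (u : ℝ) ∧ g p = γ u := by
    obtain ⟨u, hu, rfl⟩ := AddCircle.coe_image_Ico_eq (1 : ℝ) 0 ▸ mem_univ p
    rw [zero_add] at hu
    refine ⟨⟨u, hu.1, hu.2.le⟩, hu.2, rfl, ?_⟩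
    exact (AddCircle.liftIco_zero_coe_apply hu).trans (γ.extend_apply ⟨hu.1, hu.2.le⟩)
  have hg_inj : Injective g := by
    intro p q hpq
    obtain ⟨u, hu, rfl, hgu⟩ := hg_apply p
    obtain ⟨v, hv, rfl, hgv⟩ := hg_apply q
    rw [hgu, hgv] at hpq
    rcases lt_trichotomy u v with h | rfl | h
    · exact absurd (hγ u v h hpq).2 hv.ne
    · rfl
    · exact absurd (hγ v u h hpq.symm).2 hu.ne
  exact ⟨range g, ⟨(hg.isClosedEmbedding hg_inj).isEmbedding.toHomeomorph.symm.trans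
    (AddCircle.homeomorphCircle one_ne_zero)⟩⟩

theorem not_arcJoinedIn_of_inter_subset [T2Space X] (hX : ∀ S : Set X, ¬ IsSimpleClosedCurve S)
    {γ : Path a b} (hγ : Injective γ) (hY : ∀ z ∈ range γ ∩ Y, z = a ∨ z = b) :
    ¬ ArcJoinedIn Y a b := by
  rintro (hab | ⟨δ, hδ, hδY⟩)
  · exact zero_ne_one (hγ (by rw [γ.source, γ.target, hab]))
  obtain ⟨S, hS⟩ := exists_isSimpleClosedCurve_of_loop (γ.trans δ.symm) fun u v huv e => by
    obtain ⟨s, t, hst, hs, ht⟩ :=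
      exists_eq_of_path_trans_eq hγ (injective_path_symm hδ) huv e
    have hst_ends : (s = 0 ∧ t = 1) ∨ (s = 1 ∧ t = 0) := by
      have hsY : γ s ∈ Y := by
        rw [hst]
        exact hδY (δ.symm_range ▸ mem_range_self t)
      refine (hY _ ⟨mem_range_self s, hsY⟩).imp (fun h => ⟨hγ ?_, injective_path_symm hδ ?_⟩)
        fun h => ⟨hγ ?_, injective_path_symm hδ ?_⟩
      · rw [h, γ.source]
      · rw [← hst, h, δ.symm.target]
      · rw [h, γ.target]
      · rw [← hst, h, δ.symm.source]
    have huv' : (u : ℝ) < v := huv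
    rcases hst_ends with ⟨rfl, rfl⟩ | ⟨rfl, rfl⟩ <;>
      simp only [Icc.coe_zero, Icc.coe_one] at hs ht
    · exact ⟨Subtype.ext (by simpa using hs.symm), Subtype.ext (by rw [Icc.coe_one]; linarith)⟩
    · linarith
  exact hX S hS

end Arcs

/-- An open edge of `X`, given by a continuous coordinate defined on all of `X` together with a
continuous inverse over the open interval `(0, 1)`. The values of `coord` outside `(0, 1)` and of
`param` outside `(0, 1)` carry no meaning beyond continuity. -/
structure EdgeChart (X : Type*) [TopologicalSpace X] where
  coord : X → ℝ
  param : ℝ → X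
  continuous_coord : Continuous coord
  continuous_param : Continuous param
  coord_param : ∀ s ∈ Ioo (0 : ℝ) 1, coord (param s) = s
  param_coord : ∀ z, coord z ∈ Ioo (0 : ℝ) 1 → param (coord z) = z

namespace EdgeChart

variable {X : Type*} [TopologicalSpace X] (e : EdgeChart X)

/-- The open edge itself, as a subset of `X`. -/
def source : Set X := e.coord ⁻¹' Ioo 0 1

/-- A set is *convex along* an edge if it contains each point of the edge whose coordinate lies
between those of two of its points; the two points need not lie on the edge. -/
def IsConvex (C : Set X) : Prop :=
  ∀ ⦃u v w : X⦄, u ∈ C → v ∈ C → w ∈ e.source → e.coord u ≤ e.coord w → e.coord w ≤ e.coord v →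
    w ∈ C

variable {e}

theorem eq_of_coord_eq {z w : X} (hw : w ∈ e.source) (h : e.coord z = e.coord w) : z = w := by
  rw [← e.param_coord w hw, ← h, e.param_coord z (by rw [h]; exact hw)]

theorem isConvex_of_isPreconnected {C : Set X} (hC : IsPreconnected C) : e.IsConvex C := by
  intro u v w hu hv hw huw hwv
  obtain ⟨z, hz, hzw⟩ := hC.intermediate_value hu hv e.continuous_coord.continuousOn ⟨huw, hwv⟩
  rwa [← eq_of_coord_eq hw hzw]

theorem image_param {J : Set ℝ} (hJ : J ⊆ Ioo 0 1) : e.param '' J = e.coord ⁻¹' J := by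
  refine Subset.antisymm ?_ fun z hz => ⟨e.coord z, hz, e.param_coord z (hJ hz)⟩
  rintro _ ⟨s, hs, rfl⟩
  rwa [mem_preimage, e.coord_param s (hJ hs)]

theorem isPreconnected_preimage_coord {J : Set ℝ} (hJ : J ⊆ Ioo 0 1) (hJc : J.OrdConnected) :
    IsPreconnected (e.coord ⁻¹' J) := by
  rw [← image_param hJ]
  exact hJc.isPreconnected.image _ e.continuous_param.continuousOn

end EdgeChart

/-- Finitely many open edges covering all but finitely many points of `X`. -/
structure EdgeAtlas (X : Type*) [TopologicalSpace X] where
  card : ℕ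
  chart : Fin card → EdgeChart X
  finite_vertices : {z | ∀ i, z ∉ (chart i).source}.Finite

section Trees

variable {X : Type*} [TopologicalSpace X] {Y : Set X} {a b : X}

theorem IsArc.exists_path {A : Set X} (hA : IsArc A) :
    ∃ a b, ∃ γ : Path a b, Injective γ ∧ range γ = A := by
  obtain ⟨h⟩ := hA
  refine ⟨_, _, ⟨⟨Subtype.val ∘ h.symm, by fun_prop⟩, rfl, rfl⟩,
    Subtype.val_injective.comp h.symm.injective, ?_⟩
  exact (h.symm.surjective.range_comp _).trans Subtype.range_coe

theorem IsArc.isClosed [T2Space X] {A : Set X} (hA : IsArc A) : IsClosed A := by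
  obtain ⟨_, _, γ, -, rfl⟩ := hA.exists_path
  exact (isCompact_range γ.continuous).isClosed

theorem IsArc.arcJoinedIn {A : Set X} (hA : IsArc A) (hAY : A ⊆ Y) {p q : X} (hp : p ∈ A)
    (hq : q ∈ A) : ArcJoinedIn Y p q := by
  obtain ⟨_, _, γ, hγ, rfl⟩ := hA.exists_path
  obtain ⟨s, rfl⟩ := hp
  obtain ⟨t, rfl⟩ := hq
  exact ArcJoinedIn.of_path hγ hAY s t

theorem IsArcEndpoint.eq_source_or_eq_target [T2Space X] {γ : Path a b} (hγ : Injective γ) {p : X}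
    (hp : IsArcEndpoint (range γ) p) : p = a ∨ p = b := by
  obtain ⟨⟨t, rfl⟩, hconn⟩ := hp
  by_contra! hne
  have hclosed {K : Set unitInterval} (hK : IsClosed K) : IsClosed (γ '' K) :=
    (hK.isCompact.image γ.continuous).isClosed
  obtain ⟨_, ⟨-, hp⟩, ⟨s, hs, rfl⟩, s', hs', e⟩ := isPreconnected_closed_iff.1 hconn.isPreconnected
    (γ '' Iic t) (γ '' Ici t) (hclosed isClosed_Iic) (hclosed isClosed_Ici)
    (by rw [← image_union, Iic_union_Ici, image_univ]; exact sdiff_subset)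
    ⟨a, ⟨γ.source_mem_range, hne.1.symm⟩, 0, unitInterval.nonneg', γ.source⟩
    ⟨b, ⟨γ.target_mem_range, hne.2.symm⟩, 1, unitInterval.le_one', γ.target⟩
  obtain rfl := hγ e
  exact hp (congr_arg γ (le_antisymm hs hs'))

theorem exists_continuous_retraction_of_path [T2Space X] {γ : Path a b} (hγ : Injective γ)
    {L R : Set X} (hL : IsClosed L) (hR : IsClosed R) (hLR : Disjoint L R)
    (hcover : range γ ∪ (L ∪ R) = univ)
    (haL : ∀ t, γ t ∈ L → t = 0) (hbR : ∀ t, γ t ∈ R → t = 1) :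
    ∃ c : X → unitInterval, Continuous c ∧ (∀ t, c (γ t) = t) ∧
      ∀ z, γ (c z) = z ∨ c z = 0 ∨ c z = 1 := by
  have hexists (z : X) : ∃ c : unitInterval, γ c = z ∨ (z ∈ L ∧ c = 0) ∨ (z ∈ R ∧ c = 1) := by
    rcases (hcover ▸ mem_univ z : z ∈ range γ ∪ (L ∪ R)) with ⟨t, rfl⟩ | hz | hz
    exacts [⟨t, .inl rfl⟩, ⟨0, .inr (.inl ⟨hz, rfl⟩)⟩, ⟨1, .inr (.inr ⟨hz, rfl⟩)⟩]
  choose c hc using hexists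
  have hcγ (t) : c (γ t) = t := by
    rcases hc (γ t) with h | ⟨h, h0⟩ | ⟨h, h1⟩
    exacts [hγ h, h0.trans (haL t h).symm, h1.trans (hbR t h).symm]
  have hcL {z} (hz : z ∈ L) : c z = 0 := by
    rcases hc z with h | ⟨-, h0⟩ | ⟨h, -⟩
    exacts [haL _ (by rwa [h]), h0, absurd h (hLR.notMem_of_mem_left hz)]
  have hcR {z} (hz : z ∈ R) : c z = 1 := by
    rcases hc z with h | ⟨h, -⟩ | ⟨-, h1⟩
    exacts [hbR _ (by rwa [h]), absurd hz (hLR.notMem_of_mem_left h), h1]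
  refine ⟨c, continuous_iff_isClosed.2 fun C hC => ?_, hcγ,
    fun z => (hc z).imp_right (Or.imp And.right And.right)⟩
  have hpre : c ⁻¹' C = γ '' C ∪ ({z ∈ L | (0 : unitInterval) ∈ C} ∪
      {z ∈ R | (1 : unitInterval) ∈ C}) := by
    ext z
    constructor
    · intro hz
      rcases hc z with h | ⟨h, h0⟩ | ⟨h, h1⟩
      exacts [.inl ⟨c z, hz, h⟩, .inr (.inl ⟨h, h0 ▸ hz⟩), .inr (.inr ⟨h, h1 ▸ hz⟩)]
    · rintro (⟨t, ht, rfl⟩ | ⟨hz, h0⟩ | ⟨hz, h1⟩)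
      exacts [by rwa [mem_preimage, hcγ], by rwa [mem_preimage, hcL hz],
        by rwa [mem_preimage, hcR hz]]
  rw [hpre]
  exact (hC.isCompact.image γ.continuous).isClosed.union
    ((hL.inter isClosed_const).union (hR.inter isClosed_const))

theorem exists_edgeChart_of_path [T2Space X] {γ : Path a b} (hγ : Injective γ) {L R : Set X}
    (hL : IsClosed L) (hR : IsClosed R) (hLR : Disjoint L R) (hcover : range γ ∪ (L ∪ R) = univ)
    (haL : ∀ t, γ t ∈ L → t = 0) (hbR : ∀ t, γ t ∈ R → t = 1) :
    ∃ e : EdgeChart X, ∀ z ∈ range γ, z ≠ a → z ≠ b → z ∈ e.source := by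
  obtain ⟨c, hc, hcγ, hγc⟩ := exists_continuous_retraction_of_path hγ hL hR hLR hcover haL hbR
  refine ⟨⟨fun z => c z, γ.extend, continuous_subtype_val.comp hc, γ.continuous_extend,
    fun s hs => ?_, fun z hz => ?_⟩, ?_⟩
  · rw [γ.extend_apply ⟨hs.1.le, hs.2.le⟩, hcγ]
  · rw [γ.extend_apply (c z).2]
    rcases hγc z with h | h0 | h1
    · exact h
    · exact absurd hz.1 (by simp [h0])
    · exact absurd hz.2 (by simp [h1])
  · rintro _ ⟨t, rfl⟩ ha hb
    change (c (γ t) : ℝ) ∈ Ioo 0 1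
    rw [hcγ]
    exact ⟨unitInterval.pos_iff_ne_zero.2 fun h => ha (h ▸ γ.source),
      unitInterval.lt_one_iff_ne_one.2 fun h => hb (h ▸ γ.target)⟩

theorem isClosed_of_forall_subset {ℬ : Set (Set X)} (hfin : ℬ.Finite)
    (hclosed : ∀ B ∈ ℬ, IsClosed B) {M : Set X} (hMsub : M ⊆ ⋃₀ ℬ)
    (hM : ∀ B ∈ ℬ, ∀ z ∈ B, z ∈ M → B ⊆ M) : IsClosed M := by
  have hM_eq : M = ⋃₀ {B ∈ ℬ | B ⊆ M} := by
    refine Subset.antisymm (fun z hz => ?_) (sUnion_subset fun B hB => hB.2)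
    obtain ⟨B, hB, hzB⟩ := hMsub hz
    exact ⟨B, ⟨hB, hM B hB z hzB hz⟩, hzB⟩
  rw [hM_eq, sUnion_eq_biUnion]
  exact (hfin.subset (sep_subset _ _)).isClosed_biUnion fun B hB => hclosed B hB.1

/-- The other arcs fall into those joined to one end of `E` and the rest; as `X` contains no simple
closed curve, the other end of `E` only meets the rest. -/
theorem exists_edgeChart_of_mem [T2Space X] {𝒜 : Finset (Set X)} (hA : ∀ A ∈ 𝒜, IsArc A)
    (hcover : ⋃₀ (𝒜 : Set (Set X)) = univ)
    (hend : ∀ A ∈ 𝒜, ∀ B ∈ 𝒜, A ≠ B → ∀ p ∈ A ∩ B, IsArcEndpoint A p)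
    (hX : ∀ S : Set X, ¬ IsSimpleClosedCurve S) {E : Set X} (hE : E ∈ 𝒜) :
    ∃ e : EdgeChart X, (E \ e.source).Finite := by
  obtain ⟨a, b, γ, hγ, rfl⟩ := (hA E hE).exists_path
  let ℬ : Set (Set X) := {B ∈ (𝒜 : Set (Set X)) | B ≠ range γ}
  let Y := ⋃₀ ℬ
  have hinter : ∀ z ∈ range γ ∩ Y, z = a ∨ z = b := by
    rintro z ⟨hz, B, ⟨hB, hne⟩, hzB⟩
    exact (hend _ hE B hB hne.symm z ⟨hz, hzB⟩).eq_source_or_eq_target hγ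
  have hjoin {B} (hB : B ∈ ℬ) {p q} (hp : p ∈ B) (hq : q ∈ B) : ArcJoinedIn Y p q :=
    (hA B hB.1).arcJoinedIn (subset_sUnion_of_mem hB) hp hq
  have hclosed {M : Set X} := isClosed_of_forall_subset (M := M)
    (𝒜.finite_toSet.subset (sep_subset _ _) : ℬ.Finite) fun B hB => (hA B hB.1).isClosed
  refine (exists_edgeChart_of_path hγ (L := {z ∈ Y | ArcJoinedIn Y a z})
    (R := {z ∈ Y | ¬ ArcJoinedIn Y a z})
    (hclosed (sep_subset _ _) fun B hB z hzB hz w hw =>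
      ⟨⟨B, hB, hw⟩, hz.2.trans (hjoin hB hzB hw)⟩)
    (hclosed (sep_subset _ _) fun B hB z hzB hz w hw =>
      ⟨⟨B, hB, hw⟩, fun h => hz.2 (h.trans (hjoin hB hw hzB))⟩)
    (disjoint_left.2 fun z hz hz' => hz'.2 hz.2) ?_ ?_ ?_).imp fun e he =>
      (toFinite {a, b}).subset fun z hz => ?_
  · refine eq_univ_of_forall fun z => ?_
    obtain ⟨B, hB, hzB⟩ := hcover.symm ▸ mem_univ z
    by_cases hne : B = range γ
    · exact .inl (hne ▸ hzB)
    · exact .inr ((em (ArcJoinedIn Y a z)).imp (⟨⟨B, ⟨hB, hne⟩, hzB⟩, ·⟩)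
        (⟨⟨B, ⟨hB, hne⟩, hzB⟩, ·⟩))
  · intro t ht
    refine hγ (((hinter _ ⟨mem_range_self t, ht.1⟩).resolve_right fun h => ?_).trans γ.source.symm)
    exact not_arcJoinedIn_of_inter_subset hX hγ hinter (h ▸ ht.2)
  · intro t ht
    refine hγ (((hinter _ ⟨mem_range_self t, ht.1⟩).resolve_left fun h => ?_).trans γ.target.symm)
    exact ht.2 (.inl h.symm)
  · by_contra! hne
    rw [mem_insert_iff, mem_singleton_iff, not_or] at hne
    exact hz.2 (he z hz.1 hne.1 hne.2)

end Trees

theorem IsTree.nonempty_edgeAtlas {X : Type*} [MetricSpace X] (hX : IsTree X) :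
    Nonempty (EdgeAtlas X) := by
  obtain ⟨-, -, ⟨𝒜, hA, hcover, hend⟩, hscc⟩ := hX
  choose e he using fun E : 𝒜 => exists_edgeChart_of_mem hA hcover
    (fun A hA B hB hAB p hp => (hend A hA B hB hAB p hp).1) hscc E.2
  refine ⟨⟨Fintype.card 𝒜, fun i => e ((Fintype.equivFin 𝒜).symm i),
    (finite_iUnion he).subset fun z hz => ?_⟩⟩
  obtain ⟨E, hE, hzE⟩ := hcover.symm ▸ mem_univ z
  refine mem_iUnion.2 ⟨⟨E, hE⟩, hzE, ?_⟩
  simpa using hz (Fintype.equivFin 𝒜 ⟨E, hE⟩)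

theorem EdgeAtlas.exists_strictMono_coord {X : Type*} [TopologicalSpace X] (𝒢 : EdgeAtlas X)
    {S : Set X} (hS : S.Infinite) (k : ℕ) :
    ∃ i, ∃ o : Fin k → X, (∀ j, o j ∈ S ∩ (𝒢.chart i).source) ∧
      StrictMono fun j => (𝒢.chart i).coord (o j) := by
  obtain ⟨i, hi⟩ : ∃ i, (S ∩ (𝒢.chart i).source).Infinite := by
    by_contra! hfin
    refine hS (((finite_iUnion hfin).union 𝒢.finite_vertices).subset fun z hz => ?_)
    by_cases h : ∃ i, z ∈ (𝒢.chart i).source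
    · exact .inl (mem_iUnion.2 (h.imp fun i hzi => ⟨hz, hzi⟩))
    · exact .inr (not_exists.1 h)
  have hinj : InjOn (𝒢.chart i).coord (S ∩ (𝒢.chart i).source) :=
    fun z _ w hw h => EdgeChart.eq_of_coord_eq hw.2 h
  obtain ⟨T, hT, hcard⟩ := (hi.image hinj).exists_subset_card_eq k
  choose o ho hcoord using fun j => hT (T.orderEmbOfFin_mem hcard j)
  exact ⟨i, o, ho, by simpa only [hcoord] using (T.orderEmbOfFin hcard).strictMono⟩

section OmegaLimit

variable {X : Type*} [TopologicalSpace X] {f : X → X} {x z : X}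

theorem mem_omegaLimitSet_iff_mapClusterPt :
    z ∈ omegaLimitSet f x ↔ MapClusterPt z atTop fun t : ℕ => f^[t] x := by
  rw [mapClusterPt_iff_frequently]
  simp only [omegaLimitSet, mem_iInter, mem_closure_iff_nhds, frequently_atTop]
  constructor
  · intro h U hU n
    obtain ⟨_, hyU, k, hk, rfl⟩ := h n U hU
    exact ⟨k, hk, hyU⟩
  · intro h n U hU
    obtain ⟨k, hk, hkU⟩ := h U hU n
    exact ⟨_, hkU, k, hk, rfl⟩

theorem exists_ge_iterate_mem_of_mem_omegaLimitSet (hz : z ∈ omegaLimitSet f x) {U : Set X}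
    (hU : IsOpen U) (hzU : z ∈ U) (n : ℕ) : ∃ t ≥ n, f^[t] x ∈ U :=
  frequently_atTop.1 (mapClusterPt_iff_frequently.1 (mem_omegaLimitSet_iff_mapClusterPt.1 hz) U
    (hU.mem_nhds hzU)) n

theorem isClosed_omegaLimitSet : IsClosed (omegaLimitSet f x) :=
  isClosed_iInter fun _ => isClosed_closure

theorem injective_iterate_of_infinite_omegaLimitSet [T1Space X]
    (hx : (omegaLimitSet f x).Infinite) : Injective fun t : ℕ => f^[t] x := by
  intro s t hst
  by_contra hne
  wlog hlt : s < t generalizing s t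
  · exact this hst.symm (Ne.symm hne) (by omega)
  have hper : IsPeriodicPt f (t - s) (f^[s] x) := by
    rw [IsPeriodicPt, IsFixedPt, ← iterate_add_apply, Nat.sub_add_cancel hlt.le]
    exact hst.symm
  have hfin : ((fun r => f^[r] (f^[s] x)) '' Iio (t - s)).Finite := (finite_Iio _).image _
  refine hx (hfin.subset ((iInter_subset _ s).trans (closure_minimal ?_ hfin.isClosed)))
  rintro _ ⟨k, hk, rfl⟩
  refine ⟨(k - s) % (t - s), Nat.mod_lt _ (Nat.sub_pos_of_lt hlt), ?_⟩
  dsimp only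
  rw [hper.iterate_mod_apply, ← iterate_add_apply, Nat.sub_add_cancel hk]

/-- Along an ultrafilter realising `z`, the times lie in one residue class modulo `n`, and the
corresponding points of the orbit under `f^[n]` converge by compactness. -/
theorem omegaLimitSet_subset_iUnion_image [CompactSpace X] [T2Space X] (hf : Continuous f) {n : ℕ}
    (hn : 0 < n) (a : ℕ) :
    omegaLimitSet f x ⊆ ⋃ i ∈ Iio n, f^[i] '' omegaLimitSet f^[n] (f^[a] x) := by
  intro z hz
  obtain ⟨U, hU, hUz⟩ := mapClusterPt_iff_ultrafilter.1 (mem_omegaLimitSet_iff_mapClusterPt.1 hz)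
  obtain ⟨i, hi, hres⟩ : ∃ i ∈ Iio n, ∀ᶠ t in (U : Filter ℕ), (t - a) % n = i :=
    (Ultrafilter.eventually_exists_mem_iff (finite_Iio n)).1
      (.of_forall fun t => ⟨_, Nat.mod_lt _ hn, rfl⟩)
  let quot : ℕ → ℕ := fun t => (t - a) / n
  have hquot : Tendsto quot atTop atTop := by
    refine tendsto_atTop.2 fun b => ?_
    filter_upwards [eventually_ge_atTop (b * n + a)] with t ht
    exact (Nat.le_div_iff_mul_le hn).2 (by omega)
  obtain ⟨w, -, hw⟩ := isCompact_univ.ultrafilter_le_nhds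
    (U.map fun t => (f^[n])^[quot t] (f^[a] x)) (by simp)
  refine mem_iUnion₂.2 ⟨i, hi, w, ?_, ?_⟩
  · exact mem_omegaLimitSet_iff_mapClusterPt.2
      (mapClusterPt_iff_ultrafilter.2 ⟨U.map quot, (map_mono hU).trans hquot, hw⟩)
  · refine tendsto_nhds_unique ((((hf.iterate i).tendsto w).comp hw).congr' ?_) hUz
    filter_upwards [hres, hU (eventually_ge_atTop a)] with t ht (hta : a ≤ t)
    have := Nat.div_add_mod (t - a) n
    simp only [comp_apply, quot, ← iterate_mul, ← iterate_add_apply]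
    congr 2
    omega

theorem infinite_omegaLimitSet_iterate [CompactSpace X] [T2Space X] (hf : Continuous f)
    (hx : (omegaLimitSet f x).Infinite) {n : ℕ} (hn : 0 < n) (a : ℕ) :
    (omegaLimitSet f^[n] (f^[a] x)).Infinite := fun hfin =>
  hx (((finite_Iio n).biUnion fun i _ => hfin.image f^[i]).subset
    (omegaLimitSet_subset_iUnion_image hf hn a))

end OmegaLimit

section Displacement

variable {X : Type*} [TopologicalSpace X] {g : X → X} {c : X → ℝ} {J : Set X}

theorem forall_lt_comp_of_exists_lt (hg : Continuous g) (hc : Continuous c)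
    (hJ : IsPreconnected J) (hne : ∀ w ∈ J, c (g w) ≠ c w) (hlt : ∃ z ∈ J, c z < c (g z)) :
    ∀ w ∈ J, c w < c (g w) := by
  obtain ⟨z, hz, hzlt⟩ := hlt
  intro w hw
  by_contra! hle
  obtain ⟨v, hv, hvc⟩ := hJ.intermediate_value₂ hw hz (hc.comp hg).continuousOn hc.continuousOn
    hle hzlt.le
  exact hne v hv hvc

theorem forall_lt_comp_iterate_mul (hg : Continuous g) (hc : Continuous c)
    (hJ : IsPreconnected J) (hne : ∀ n > 0, ∀ w ∈ J, c (g^[n] w) ≠ c w) {n : ℕ} (hn : 0 < n)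
    {z : X} (hz : z ∈ J) (hgz : g^[n] z ∈ J) (hlt : c z < c (g^[n] z)) {k : ℕ} (hk : 0 < k) :
    ∀ w ∈ J, c w < c (g^[k * n] w) := by
  induction k, hk using Nat.le_induction with
  | base =>
    rw [Nat.succ_eq_add_one, zero_add, one_mul]
    exact forall_lt_comp_of_exists_lt (hg.iterate n) hc hJ (hne n hn) ⟨z, hz, hlt⟩
  | succ k _ ih =>
    refine forall_lt_comp_of_exists_lt (hg.iterate _) hc hJ (hne _ (Nat.mul_pos k.succ_pos hn))
      ⟨z, hz, hlt.trans ?_⟩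
    rw [add_mul, one_mul, iterate_add_apply]
    exact ih _ hgz

/-- Otherwise the rise over `t₂ - t₁` steps, repeated `t₃ - t₂` times, and the fall over `t₃ - t₂`
steps, repeated `t₂ - t₁` times, would give opposite signs to the same displacement. -/
theorem exists_comp_iterate_eq_of_turn (hg : Continuous g) (hc : Continuous c)
    (hJ : IsPreconnected J) {y : X} {t₁ t₂ t₃ : ℕ} (h₁₂ : t₁ < t₂) (h₂₃ : t₂ < t₃)
    (h₁ : g^[t₁] y ∈ J) (h₂ : g^[t₂] y ∈ J) (h₃ : g^[t₃] y ∈ J)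
    (hup : c (g^[t₁] y) < c (g^[t₂] y)) (hdown : c (g^[t₃] y) < c (g^[t₂] y)) :
    ∃ n > 0, ∃ w ∈ J, c (g^[n] w) = c w := by
  by_contra! hne
  have hstep : ∀ {s t}, s < t → g^[t - s] (g^[s] y) = g^[t] y := fun h => by
    rw [← iterate_add_apply, Nat.sub_add_cancel h.le]
  have hrise := forall_lt_comp_iterate_mul hg hc hJ hne (Nat.sub_pos_of_lt h₁₂) h₁
    (by rwa [hstep h₁₂]) (by rwa [hstep h₁₂]) (Nat.sub_pos_of_lt h₂₃) _ h₁
  have hfall := forall_lt_comp_iterate_mul hg hc.neg hJ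
    (fun n hn w hw => neg_injective.ne (hne n hn w hw)) (Nat.sub_pos_of_lt h₂₃) h₂
    (by rwa [hstep h₂₃]) (neg_lt_neg (by rwa [hstep h₂₃])) (Nat.sub_pos_of_lt h₁₂) _ h₁
  rw [Nat.mul_comm] at hfall
  exact lt_asymm hrise (neg_lt_neg_iff.1 hfall)

end Displacement

namespace EdgeChart

variable {X : Type*} [TopologicalSpace X] {e : EdgeChart X} {g : X → X} {y : X}

theorem exists_mem_periodicPts_coord_mem (hg : Continuous g) {w₁ w₂ : X}
    (hw₁ : w₁ ∈ omegaLimitSet g y) (hw₂ : w₂ ∈ omegaLimitSet g y) {u v : ℝ} (hu : 0 ≤ u)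
    (hv : v ≤ 1) (h₁ : u < e.coord w₁) (h₁₂ : e.coord w₁ < e.coord w₂) (h₂ : e.coord w₂ < v) :
    ∃ z ∈ periodicPts g, e.coord z ∈ Ioo u v := by
  obtain ⟨mid, hmid₁, hmid₂⟩ := exists_between h₁₂
  have hlow : IsOpen (e.coord ⁻¹' Ioo u mid) := isOpen_Ioo.preimage e.continuous_coord
  have hhigh : IsOpen (e.coord ⁻¹' Ioo mid v) := isOpen_Ioo.preimage e.continuous_coord
  obtain ⟨t₁, -, ht₁⟩ := exists_ge_iterate_mem_of_mem_omegaLimitSet hw₁ hlow ⟨h₁, hmid₁⟩ 0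
  obtain ⟨t₂, h₁₂, ht₂⟩ :=
    exists_ge_iterate_mem_of_mem_omegaLimitSet hw₂ hhigh ⟨hmid₂, h₂⟩ (t₁ + 1)
  obtain ⟨t₃, h₂₃, ht₃⟩ :=
    exists_ge_iterate_mem_of_mem_omegaLimitSet hw₁ hlow ⟨h₁, hmid₁⟩ (t₂ + 1)
  have hlow_sub : e.coord ⁻¹' Ioo u mid ⊆ e.coord ⁻¹' Ioo u v :=
    preimage_mono (Ioo_subset_Ioo_right (hmid₂.trans h₂).le)
  have hhigh_sub : e.coord ⁻¹' Ioo mid v ⊆ e.coord ⁻¹' Ioo u v :=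
    preimage_mono (Ioo_subset_Ioo_left (h₁.trans hmid₁).le)
  have hsub : Ioo u v ⊆ Ioo (0 : ℝ) 1 := Ioo_subset_Ioo hu hv
  obtain ⟨n, hn, z, hz, hzn⟩ := exists_comp_iterate_eq_of_turn hg e.continuous_coord
    (isPreconnected_preimage_coord hsub ordConnected_Ioo) h₁₂ h₂₃ (hlow_sub ht₁) (hhigh_sub ht₂)
    (hlow_sub ht₃) (ht₁.2.trans ht₂.1) (ht₃.2.trans ht₂.1)
  exact ⟨z, ⟨n, hn, eq_of_coord_eq (hsub hz) hzn⟩, hz⟩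

theorem IsConvex.preimage_coord_Icc_subset {C : Set X} (hC : e.IsConvex C)
    (hev : ∀ᶠ t in atTop, g^[t] y ∈ C) {w₁ w₂ : X} (hw₁ : w₁ ∈ omegaLimitSet g y ∩ e.source)
    (hw₂ : w₂ ∈ omegaLimitSet g y ∩ e.source) {α β : ℝ} (hα : e.coord w₁ < α)
    (hβ : β < e.coord w₂) : e.coord ⁻¹' Icc α β ⊆ C := by
  obtain ⟨T, hT⟩ := eventually_atTop.1 hev
  obtain ⟨t₁, ht₁, hlow⟩ := exists_ge_iterate_mem_of_mem_omegaLimitSet hw₁.1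
    (isOpen_Iio.preimage e.continuous_coord) hα T
  obtain ⟨t₂, ht₂, hhigh⟩ := exists_ge_iterate_mem_of_mem_omegaLimitSet hw₂.1
    (isOpen_Ioi.preimage e.continuous_coord) hβ T
  intro z hz
  exact hC (hT t₁ ht₁) (hT t₂ ht₂)
    ⟨hw₁.2.1.trans (hα.trans_le hz.1), (hz.2.trans_lt hβ).trans hw₂.2.2⟩
    (hlow.le.trans hz.1) (hz.2.trans hhigh.le)

end EdgeChart

section ForwardOrbit

variable {X : Type*} {G : X → X} {V : Set X}

theorem mapsTo_iUnion_iterate_image :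
    MapsTo G (⋃ j : ℕ, G^[j] '' V) (⋃ j : ℕ, G^[j] '' V) := by
  intro z hz
  obtain ⟨j, v, hv, rfl⟩ := mem_iUnion.1 hz
  exact mem_iUnion.2 ⟨j + 1, v, hv, iterate_succ_apply' G j v⟩

theorem isPreconnected_iUnion_iterate_image [TopologicalSpace X] (hG : Continuous G)
    (hV : IsPreconnected V) {r : X} (hr : r ∈ V) (hGr : IsFixedPt G r) :
    IsPreconnected (⋃ j : ℕ, G^[j] '' V) :=
  isPreconnected_iUnion ⟨r, mem_iInter.2 fun j => ⟨r, hr, hGr.iterate j⟩⟩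
    fun j => hV.image _ (hG.iterate j).continuousOn

theorem eventually_mem_iterate_image {p : X} (hGp : IsFixedPt G p)
    (hp : p ∈ ⋃ j : ℕ, G^[j] '' V) : ∀ᶠ j in atTop, p ∈ G^[j] '' V := by
  obtain ⟨i, v, hv, hvp⟩ := mem_iUnion.1 hp
  filter_upwards [eventually_ge_atTop i] with j hj
  refine ⟨v, hv, ?_⟩
  rw [← Nat.sub_add_cancel hj, iterate_add_apply, hvp]
  exact hGp.iterate _

end ForwardOrbit

namespace EdgeChart

variable {X : Type*} [TopologicalSpace X] {e : EdgeChart X} {g G : X → X}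

theorem eventually_preimage_coord_Icc_subset_image (hG : Continuous G) {V : Set X}
    (hV : IsPreconnected V) {r : X} (hr : r ∈ V) (hGr : IsFixedPt G r) {y : X}
    (hev : ∀ᶠ t in atTop, g^[t] y ∈ ⋃ j : ℕ, G^[j] '' V) {p q : X} (hGp : IsFixedPt G p)
    (hGq : IsFixedPt G q) {w₁ w₂ : X} (hw₁ : w₁ ∈ omegaLimitSet g y ∩ e.source)
    (hw₂ : w₂ ∈ omegaLimitSet g y ∩ e.source) (hp : e.coord w₁ < e.coord p)
    (hpq : e.coord p ≤ e.coord q) (hq : e.coord q < e.coord w₂) :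
    ∀ᶠ j in atTop, e.coord ⁻¹' Icc (e.coord p) (e.coord q) ⊆ G^[j] '' V := by
  have hsub := (isConvex_of_isPreconnected (isPreconnected_iUnion_iterate_image hG hV hr hGr)
    ).preimage_coord_Icc_subset hev hw₁ hw₂ hp hq
  filter_upwards [eventually_mem_iterate_image hGp (hsub (left_mem_Icc.2 hpq)),
    eventually_mem_iterate_image hGq (hsub (right_mem_Icc.2 hpq))] with j hpj hqj z hz
  exact isConvex_of_isPreconnected (hV.image _ (hG.iterate j).continuousOn) hpj hqj
    ⟨hw₁.2.1.trans (hp.trans_le hz.1), (hz.2.trans_lt hq).trans hw₂.2.2⟩ hz.1 hz.2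

theorem eventually_preimage_coord_Icc_subset_image_of_absorbing (hg : Continuous g) {P : Set X}
    (hPc : IsPreconnected P) (hP : MapsTo g P P) {y : X} (hy : y ∈ P) {k : ℕ}
    (habs : ∀ Q ⊆ P, IsPreconnected Q → MapsTo g^[k] Q Q → (∃ t, g^[t] y ∈ Q) →
      ∀ᶠ t in atTop, g^[t] y ∈ Q)
    {p q r : X} (hp : IsPeriodicPt g k p) (hq : IsPeriodicPt g k q) (hr : IsPeriodicPt g k r)
    {w w₁ w₂ : X} (hw : w ∈ omegaLimitSet g y) (hw₁ : w₁ ∈ omegaLimitSet g y ∩ e.source)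
    (hw₂ : w₂ ∈ omegaLimitSet g y ∩ e.source) {α β : ℝ} (hrI : e.coord r ∈ Ioo α β)
    (hwI : e.coord w ∈ Ioo α β) (hw₁p : e.coord w₁ < e.coord p) (hpα : e.coord p ≤ α)
    (hβq : β ≤ e.coord q) (hqw₂ : e.coord q < e.coord w₂) :
    ∀ᶠ j in atTop, e.coord ⁻¹' Icc (e.coord p) (e.coord q) ⊆
      (g^[k])^[j] '' (e.coord ⁻¹' Icc α β) := by
  have hV : IsPreconnected (e.coord ⁻¹' Icc α β) :=
    isPreconnected_preimage_coord
      (Icc_subset_Ioo (hw₁.2.1.trans (hw₁p.trans_le hpα)) ((hβq.trans_lt hqw₂).trans hw₂.2.2))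
      ordConnected_Icc
  have hVP : e.coord ⁻¹' Icc α β ⊆ P :=
    (isConvex_of_isPreconnected hPc).preimage_coord_Icc_subset
      (.of_forall fun t => hP.iterate t hy) hw₁ hw₂ (hw₁p.trans_le hpα) (hβq.trans_lt hqw₂)
  obtain ⟨t, -, ht⟩ := exists_ge_iterate_mem_of_mem_omegaLimitSet hw
    (isOpen_Ioo.preimage e.continuous_coord) hwI 0
  have hrV : r ∈ e.coord ⁻¹' Icc α β := Ioo_subset_Icc_self hrI
  have hev := habs (⋃ j : ℕ, (g^[k])^[j] '' _)
    (iUnion_subset fun j => image_subset_iff.2 fun v hv => (hP.iterate k).iterate j (hVP hv))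
    (isPreconnected_iUnion_iterate_image (hg.iterate k) hV hrV hr)
    mapsTo_iUnion_iterate_image ⟨t, mem_iUnion.2 ⟨0, _, Ioo_subset_Icc_self ht, rfl⟩⟩
  exact eventually_preimage_coord_Icc_subset_image (hg.iterate k) hV hrV hr hev hp hq hw₁ hw₂
    hw₁p (by linarith [hrI.1, hrI.2]) hqw₂

theorem hasHorseshoe_of_eventually_subset_image {a₁ b₁ a₂ b₂ α β : ℝ} (ha : 0 < a₁)
    (h₁ : a₁ ≤ b₁) (hgap : b₁ < a₂) (h₂ : a₂ ≤ b₂) (hb : b₂ < 1) (hα : α ≤ a₁) (hβ : b₂ ≤ β)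
    (hV₁ : ∀ᶠ j in atTop, e.coord ⁻¹' Icc α β ⊆ G^[j] '' (e.coord ⁻¹' Icc a₁ b₁))
    (hV₂ : ∀ᶠ j in atTop, e.coord ⁻¹' Icc α β ⊆ G^[j] '' (e.coord ⁻¹' Icc a₂ b₂)) :
    HasHorseshoe G := by
  obtain ⟨j, ⟨hj₁, hj₂⟩, hj⟩ := ((hV₁.and hV₂).and (eventually_gt_atTop 0)).exists
  refine ⟨j, fun b => e.coord ⁻¹' bif b then Icc a₁ b₁ else Icc a₂ b₂, hj, ?_, ?_, ?_, ?_⟩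
  · rintro (_ | _) <;> exact isClosed_Icc.preimage e.continuous_coord
  · rintro (_ | _)
    · refine ⟨e.param a₂, ?_⟩
      rw [mem_preimage, e.coord_param a₂ ⟨by linarith, by linarith⟩]
      exact left_mem_Icc.2 h₂
    · refine ⟨e.param a₁, ?_⟩
      rw [mem_preimage, e.coord_param a₁ ⟨ha, by linarith⟩]
      exact left_mem_Icc.2 h₁
  · exact Disjoint.preimage _ (disjoint_left.2 fun s hs hs' => by linarith [hs.2, hs'.1])
  · have hsub : ∀ b : Bool, e.coord ⁻¹' (bif b then Icc a₁ b₁ else Icc a₂ b₂) ⊆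
        e.coord ⁻¹' Icc α β := by
      rintro (_ | _)
      · exact preimage_mono (Icc_subset_Icc (by linarith) hβ)
      · exact preimage_mono (Icc_subset_Icc hα (by linarith))
    rintro (_ | _) b'
    · exact (hsub b').trans hj₂
    · exact (hsub b').trans hj₁

end EdgeChart

theorem exists_pos_forall_isPeriodicPt {X ι : Type*} [Finite ι] {g : X → X} {p : ι → X}
    (hp : ∀ i, p i ∈ periodicPts g) : ∃ k > 0, ∀ i, IsPeriodicPt g k (p i) := by
  cases nonempty_fintype ι
  exact ⟨∏ i, minimalPeriod g (p i),
    Finset.prod_pos fun i _ => minimalPeriod_pos_of_mem_periodicPts (hp i),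
    fun i => (isPeriodicPt_minimalPeriod g (p i)).trans_dvd
      (Finset.dvd_prod_of_mem _ (Finset.mem_univ i))⟩

/-- Four periodic points separate fourteen points of the limit set in one edge. If every
`g^[k]`-invariant preconnected set met by the orbit absorbed it, the two segments around the inner
periodic points would each eventually cover the segment between the outer ones. -/
theorem EdgeAtlas.exists_mapsTo_not_eventually_mem {X : Type*} [TopologicalSpace X]
    (𝒢 : EdgeAtlas X) {g : X → X} (hg : Continuous g) (hN : ¬ HasHorseshoe g) {P : Set X}
    (hPc : IsPreconnected P) (hP : MapsTo g P P) {y : X} (hy : y ∈ P)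
    (hω : (omegaLimitSet g y).Infinite) :
    ∃ k > 0, ∃ Q ⊆ P, IsPreconnected Q ∧ MapsTo g^[k] Q Q ∧ (∃ t, g^[t] y ∈ Q) ∧
      ¬ ∀ᶠ t in atTop, g^[t] y ∈ Q := by
  by_contra! hcon
  obtain ⟨i, o, ho, hmono⟩ := 𝒢.exists_strictMono_coord hω 14
  set e := 𝒢.chart i
  have hlt : ∀ a b : Fin 14, a < b → e.coord (o a) < e.coord (o b) := fun a b h => hmono h
  have hper : ∀ a b c d : Fin 14, a < b → b < c → c < d →
      ∃ z ∈ periodicPts g, e.coord z ∈ Ioo (e.coord (o a)) (e.coord (o d)) := by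
    intro a b c d hab hbc hcd
    exact EdgeChart.exists_mem_periodicPts_coord_mem hg (ho b).1 (ho c).1 (ho a).2.1.le
      (ho d).2.2.le (hlt a b hab) (hlt b c hbc) (hlt c d hcd)
  obtain ⟨p, hp, hpI⟩ := hper 0 1 2 3 (by decide) (by decide) (by decide)
  obtain ⟨r₁, hr₁, hr₁I⟩ := hper 3 4 5 6 (by decide) (by decide) (by decide)
  obtain ⟨r₂, hr₂, hr₂I⟩ := hper 7 8 9 10 (by decide) (by decide) (by decide)
  obtain ⟨q, hq, hqI⟩ := hper 10 11 12 13 (by decide) (by decide) (by decide)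
  obtain ⟨k, hk, hfix⟩ : ∃ k > 0, ∀ j, IsPeriodicPt g k (![p, r₁, r₂, q] j) :=
    exists_pos_forall_isPeriodicPt fun j => by fin_cases j <;> assumption
  have h36 := hlt 3 6 (by decide)
  have h67 := hlt 6 7 (by decide)
  have h710 := hlt 7 10 (by decide)
  have hcover := fun {r w α β} hr hw =>
    EdgeChart.eventually_preimage_coord_Icc_subset_image_of_absorbing (r := r) (w := w) (α := α)
      (β := β) hg hPc hP hy (hcon k hk) (hfix 0) (hfix 3) hr hw (ho 0) (ho 13)
  exact hN (.of_iterate hk (EdgeChart.hasHorseshoe_of_eventually_subset_image (ho 3).2.1 h36.le h67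
    h710.le (ho 10).2.2 hpI.2.le hqI.1.le
    (hcover (hfix 1) (ho 4).1 hr₁I ⟨hlt 3 4 (by decide), hlt 4 6 (by decide)⟩ hpI.1 hpI.2.le
      (h67.le.trans (h710.le.trans hqI.1.le)) hqI.2)
    (hcover (hfix 2) (ho 8).1 hr₂I ⟨hlt 7 8 (by decide), hlt 8 10 (by decide)⟩ hpI.1
      (hpI.2.le.trans (h36.le.trans h67.le)) hqI.1.le hqI.2)))

section ReturnTimes

variable {X : Type*} [TopologicalSpace X]

/-- The connected component of the forward orbit of `Z` which contains `Z`, with its first return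
time. -/
theorem exists_isPreconnected_mapsTo_forall_dvd {G : X → X} (hG : Continuous G) {Z : Set X}
    (hZ : IsPreconnected Z) {z : X} (hz : z ∈ Z) {a : ℕ} (ha : 0 < a) (hGz : G^[a] z ∈ Z) :
    ∃ C n, 0 < n ∧ Z ⊆ C ∧ C ⊆ (⋃ j : ℕ, G^[j] '' Z) ∧ IsPreconnected C ∧ MapsTo G^[n] C C ∧
      ∀ i, ∀ w ∈ C, G^[i] w ∈ C → n ∣ i := by
  classical
  set O : Set X := ⋃ j : ℕ, G^[j] '' Z
  set C := connectedComponentIn O z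
  have hZC : Z ⊆ C :=
    hZ.subset_connectedComponentIn hz fun w hw => mem_iUnion.2 ⟨0, w, hw, rfl⟩
  have hCO : C ⊆ O := connectedComponentIn_subset _ _
  have hmaps : ∀ i, ∀ w ∈ C, G^[i] w ∈ C → MapsTo G^[i] C C := by
    intro i w hw hGw
    have himage : IsPreconnected (G^[i] '' C) :=
      isPreconnected_connectedComponentIn.image _ (hG.iterate i).continuousOn
    have himageO : G^[i] '' C ⊆ O :=
      image_subset_iff.2 fun v hv => mapsTo_iUnion_iterate_image.iterate i (hCO hv)
    have hsub := himage.subset_connectedComponentIn (mem_image_of_mem _ hw) himageO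
    rw [← connectedComponentIn_eq hGw] at hsub
    exact mapsTo_iff_image_subset.2 hsub
  have hex : ∃ n, 0 < n ∧ ∃ w ∈ C, G^[n] w ∈ C := ⟨a, ha, z, hZC hz, hZC hGz⟩
  obtain ⟨hpos, w, hw, hGw⟩ := Nat.find_spec hex
  have hreturn := hmaps _ w hw hGw
  refine ⟨C, Nat.find hex, hpos, hZC, hCO, isPreconnected_connectedComponentIn, hreturn, ?_⟩
  intro i v hv hGv
  by_contra hdvd
  refine Nat.find_min hex (Nat.mod_lt i hpos)
    ⟨Nat.pos_of_ne_zero fun h => hdvd (Nat.dvd_of_mod_eq_zero h),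
      (G^[Nat.find hex])^[i / Nat.find hex] v, hreturn.iterate _ hv, ?_⟩
  rwa [← iterate_mul, ← iterate_add_apply, Nat.mod_add_div]

/-- `P` is a connected set mapped into itself by `f^[n]` which the orbit of `x` visits, and visits
only at times in a single residue class modulo `n`. -/
structure IsReturnSet (f : X → X) (x : X) (n : ℕ) (P : Set X) : Prop where
  isPreconnected : IsPreconnected P
  mapsTo : MapsTo f^[n] P P
  visits : ∃ a, f^[a] x ∈ P
  modEq : ∀ s t, f^[s] x ∈ P → f^[t] x ∈ P → s ≡ t [MOD n]

end ReturnTimes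

/-- The residues modulo `k` of the times at which the orbit of `y` visits `Q`. -/
def visitResidues {X : Type*} (g : X → X) (y : X) (Q : Set X) (k : ℕ) : Set (ZMod k) :=
  Nat.cast '' {s | g^[s] y ∈ Q}

section VisitResidues

open scoped Pointwise

variable {X : Type*} {g : X → X} {y : X} {Q : Set X} {k : ℕ}

theorem mapsTo_iterate_mul {n : ℕ} (hQ : MapsTo g^[n] Q Q) (d : ℕ) :
    MapsTo g^[n * d] Q Q := by
  rw [iterate_mul]
  exact hQ.iterate d

theorem sub_mem_visitResidues_of_mem_image (hk : 0 < k) (hQ : MapsTo g^[k] Q Q) {s i : ℕ}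
    (h : g^[s] y ∈ g^[i] '' Q) : (s - i : ZMod k) ∈ visitResidues g y Q k := by
  obtain ⟨q, hq, hqs⟩ := h
  refine ⟨(k - 1) * i + s, ?_, ?_⟩
  · have hki : (k - 1) * i + i = k * i := by
      rw [← Nat.succ_mul, Nat.succ_eq_add_one, Nat.sub_add_cancel hk]
    rw [mem_ofPred_eq, iterate_add_apply, ← hqs, ← iterate_add_apply, hki]
    exact mapsTo_iterate_mul hQ i hq
  · push_cast [Nat.cast_sub hk, ZMod.natCast_self]
    ring

theorem eventually_mem_of_mem_visitResidues [NeZero k] (hQ : MapsTo g^[k] Q Q) :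
    ∀ᶠ t : ℕ in atTop, (t : ZMod k) ∈ visitResidues g y Q k → g^[t] y ∈ Q := by
  have hres : ∀ r : ZMod k, ∀ᶠ t : ℕ in atTop, r ∈ visitResidues g y Q k → (t : ZMod k) = r →
      g^[t] y ∈ Q := by
    intro r
    by_cases hr : r ∈ visitResidues g y Q k
    · obtain ⟨s, hs, rfl⟩ := hr
      filter_upwards [eventually_ge_atTop s] with t hst _ hts
      obtain ⟨d, hd⟩ :=
        (Nat.modEq_iff_dvd' hst).1 ((ZMod.natCast_eq_natCast_iff _ _ _).1 hts.symm)
      rw [← Nat.sub_add_cancel hst, hd, iterate_add_apply]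
      exact mapsTo_iterate_mul hQ d hs
    · exact .of_forall fun t h => absurd h hr
  filter_upwards [eventually_all.2 hres] with t ht hmem using ht _ hmem rfl

theorem exists_two_le_forall_dvd_iff_mem_stabilizer [NeZero k] {R : Set (ZMod k)}
    (hne : R.Nonempty) (huniv : R ≠ univ) :
    ∃ M ≥ 2, ∀ d : ℕ, M ∣ d ↔ (d : ZMod k) ∈ AddAction.stabilizer (ZMod k) R := by
  obtain ⟨a, ha⟩ := Int.subgroup_cyclic
    ((AddAction.stabilizer (ZMod k) R).comap (Int.castAddHom (ZMod k)))
  have hdvd : ∀ d : ℕ, a.natAbs ∣ d ↔ (d : ZMod k) ∈ AddAction.stabilizer (ZMod k) R := by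
    intro d
    have h := congrArg ((d : ℤ) ∈ ·) ha
    simp only [AddSubgroup.mem_comap, Int.coe_castAddHom, Int.cast_natCast,
      ← AddSubgroup.zmultiples_eq_closure, Int.mem_zmultiples_iff, eq_iff_iff] at h
    rw [h, Int.natAbs_dvd_natAbs.symm, Int.natAbs_natCast]
  refine ⟨a.natAbs, ?_, hdvd⟩
  have hpos : 0 < a.natAbs :=
    Nat.pos_of_dvd_of_pos ((hdvd k).2 (by simp [zero_mem])) (NeZero.pos k)
  by_contra! hlt
  obtain ⟨r, hr⟩ := hne
  refine huniv (eq_univ_of_forall fun r' => ?_)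
  have hmem : r' - r ∈ AddAction.stabilizer (ZMod k) R := by
    rw [← ZMod.natCast_zmod_val (r' - r)]
    exact (hdvd _).1 (by rw [show a.natAbs = 1 by omega]; exact one_dvd _)
  simpa using (AddAction.mem_stabilizer_set' R.toFinite).1 hmem hr

theorem sub_mem_stabilizer_visitResidues [NeZero k] (hQ : MapsTo g^[k] Q Q) {z : X}
    (hz : ∀ r ∈ visitResidues g y Q k, z ∈ g^[k - r.val] '' Q) {s i : ℕ}
    (h : g^[s] y = g^[i] z) :
    (s - i : ZMod k) ∈ AddAction.stabilizer (ZMod k) (visitResidues g y Q k) := by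
  refine (AddAction.mem_stabilizer_set' (toFinite _)).2 fun r hr => ?_
  obtain ⟨q, hq, hqz⟩ := hz r hr
  have hmem := sub_mem_visitResidues_of_mem_image (NeZero.pos k) hQ
    (show g^[s] y ∈ g^[i + (k - r.val)] '' Q from
      ⟨q, hq, by rw [iterate_add_apply, hqz, h]⟩)
  convert hmem using 1
  rw [vadd_eq_add]
  push_cast [Nat.cast_sub r.val_lt.le, ZMod.natCast_self, ZMod.natCast_zmod_val]
  ring

theorem eventually_mem_image_of_mem_stabilizer [NeZero k] (hQ : MapsTo g^[k] Q Q) :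
    ∀ᶠ t : ℕ in atTop, (t : ZMod k) ∈ AddAction.stabilizer (ZMod k) (visitResidues g y Q k) →
      ∀ r ∈ visitResidues g y Q k, g^[t] y ∈ g^[k - r.val] '' Q := by
  obtain ⟨T, hT⟩ := eventually_atTop.1 (eventually_mem_of_mem_visitResidues (y := y) hQ)
  filter_upwards [eventually_ge_atTop (T + k)] with t ht hmem r hr
  have hle : k - r.val ≤ t := by omega
  refine ⟨g^[t - (k - r.val)] y, hT _ (by omega) ?_, ?_⟩
  · convert (AddAction.mem_stabilizer_set' (toFinite _)).1 hmem hr using 1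
    rw [vadd_eq_add]
    push_cast [Nat.cast_sub hle, Nat.cast_sub r.val_lt.le, ZMod.natCast_self,
      ZMod.natCast_zmod_val]
    ring
  · rw [← iterate_add_apply, Nat.add_sub_cancel' hle]

end VisitResidues

section

open scoped Pointwise

variable {X : Type*} [TopologicalSpace X]

/-- `Z` is the segment between two late points of the orbit lying in one edge. -/
theorem EdgeAtlas.exists_isPreconnected_return (𝒢 : EdgeAtlas X) {G : X → X} {y : X}
    (hinj : Injective fun t => G^[t] y) (T : ℕ) :
    ∃ Z : Set X, IsPreconnected Z ∧
      (∃ s, G^[s] y ∈ Z ∧ ∃ a > 0, G^[a] (G^[s] y) ∈ Z) ∧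
      ∀ C, IsPreconnected C → (∀ t ≥ T, G^[t] y ∈ C) → Z ⊆ C := by
  obtain ⟨i, o, ho, hmono⟩ :=
    𝒢.exists_strictMono_coord ((Ici_infinite T).image hinj.injOn) 2
  set e := 𝒢.chart i
  have hlt : e.coord (o 0) < e.coord (o 1) := hmono Fin.zero_lt_one
  obtain ⟨⟨t₀, ht₀, h₀⟩, hs₀⟩ := ho 0
  obtain ⟨⟨t₁, ht₁, h₁⟩, hs₁⟩ := ho 1
  dsimp only at h₀ h₁
  have hsub : Icc (e.coord (o 0)) (e.coord (o 1)) ⊆ Ioo 0 1 := Icc_subset_Ioo hs₀.1 hs₁.2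
  have hz₀ : G^[t₀] y ∈ e.coord ⁻¹' Icc (e.coord (o 0)) (e.coord (o 1)) := by
    rw [h₀]; exact left_mem_Icc.2 hlt.le
  have hz₁ : G^[t₁] y ∈ e.coord ⁻¹' Icc (e.coord (o 0)) (e.coord (o 1)) := by
    rw [h₁]; exact right_mem_Icc.2 hlt.le
  refine ⟨e.coord ⁻¹' Icc (e.coord (o 0)) (e.coord (o 1)),
    e.isPreconnected_preimage_coord hsub ordConnected_Icc, ?_, ?_⟩
  · have hreturn : ∀ {s t}, s < t → G^[t - s] (G^[s] y) = G^[t] y := fun h => by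
      rw [← iterate_add_apply, Nat.sub_add_cancel h.le]
    have hne : t₀ ≠ t₁ := by
      rintro rfl
      exact hlt.ne (by rw [← h₀, ← h₁])
    rcases hne.lt_or_gt with h | h
    · exact ⟨t₀, hz₀, t₁ - t₀, Nat.sub_pos_of_lt h, by rwa [hreturn h]⟩
    · exact ⟨t₁, hz₁, t₀ - t₁, Nat.sub_pos_of_lt h, by rwa [hreturn h]⟩
  · intro C hC hCT z hz
    refine EdgeChart.isConvex_of_isPreconnected hC (hCT t₀ ht₀) (hCT t₁ ht₁) (hsub hz) ?_ ?_
    · rw [h₀]; exact hz.1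
    · rw [h₁]; exact hz.2

theorem IsReturnSet.of_forall_dvd {g : X → X} {y : X} {M n : ℕ} (hM : 0 < M) {C : Set X}
    (hC : IsPreconnected C) (hmaps : MapsTo (g^[M])^[n] C C) (hvisits : ∃ a, g^[a] y ∈ C)
    (hMdvd : ∀ s, g^[s] y ∈ C → M ∣ s) (hndvd : ∀ i, ∀ w ∈ C, (g^[M])^[i] w ∈ C → n ∣ i) :
    IsReturnSet g y (M * n) C := by
  refine ⟨hC, by rwa [iterate_mul], hvisits, fun s t hs ht => ?_⟩
  wlog hle : s ≤ t generalizing s t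
  · exact (this t s ht hs (le_of_not_ge hle)).symm
  obtain ⟨i, rfl⟩ := hMdvd s hs
  obtain ⟨j, rfl⟩ := hMdvd t ht
  rw [Nat.modEq_iff_dvd' hle, ← Nat.mul_sub]
  refine Nat.mul_dvd_mul_left M (hndvd _ _ hs ?_)
  rwa [← iterate_mul, ← iterate_add_apply, ← Nat.mul_add,
    Nat.sub_add_cancel (Nat.le_of_mul_le_mul_left hle hM)]

/-- Let `R` be the residues modulo `k` of the visits to a set `Q` which does not absorb the orbit.
A segment between two late points of the orbit, at times in the stabilizer `M ℤ` of `R`, lies in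
`g^[k - r] '' Q` for every `r ∈ R`, so the orbit only visits its forward orbit under `g^[M]` at
multiples of `M`. -/
theorem EdgeAtlas.exists_isReturnSet_subset [T1Space X] (𝒢 : EdgeAtlas X) {g : X → X}
    (hg : Continuous g) (hN : ¬ HasHorseshoe g) {P : Set X} (hPc : IsPreconnected P)
    (hP : MapsTo g P P) {y : X} (hy : y ∈ P) (hω : (omegaLimitSet g y).Infinite) :
    ∃ k ≥ 2, ∃ C ⊆ P, IsReturnSet g y k C := by
  obtain ⟨k, hk, Q, -, hQc, hQ, ⟨t, ht⟩, hnot⟩ :=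
    𝒢.exists_mapsTo_not_eventually_mem hg hN hPc hP hy hω
  have : NeZero k := ⟨hk.ne'⟩
  set R := visitResidues g y Q k
  obtain ⟨M, hM2, hM⟩ := exists_two_le_forall_dvd_iff_mem_stabilizer (R := R) ⟨t, t, ht, rfl⟩
    fun h => hnot ((eventually_mem_of_mem_visitResidues hQ).mono
      fun s hs => hs (eq_univ_iff_forall.1 h s))
  have hM0 : 0 < M := by omega
  obtain ⟨T, hT⟩ := eventually_atTop.1 (eventually_mem_image_of_mem_stabilizer (y := y) hQ)
  have hinj : Injective fun t => (g^[M])^[t] y := by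
    simp only [← iterate_mul]
    exact (injective_iterate_of_infinite_omegaLimitSet hω).comp (mul_right_injective₀ hM0.ne')
  obtain ⟨Z, hZ, ⟨s, hs, a, ha, hsa⟩, hZsub⟩ := 𝒢.exists_isPreconnected_return hinj T
  have hZP : Z ⊆ P := hZsub P hPc fun t _ => (hP.iterate M).iterate t hy
  have hZQ : ∀ r ∈ R, Z ⊆ g^[k - r.val] '' Q := by
    intro r hr
    refine hZsub _ (hQc.image _ (hg.iterate _).continuousOn) fun t ht => ?_
    rw [← iterate_mul]
    exact hT (M * t) (ht.trans (Nat.le_mul_of_pos_left t hM0)) ((hM _).1 ⟨t, rfl⟩) r hr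
  obtain ⟨C, n, hn, hZC, hCO, hCc, hCm, hCdvd⟩ :=
    exists_isPreconnected_mapsTo_forall_dvd (hg.iterate M) hZ hs ha hsa
  refine ⟨M * n, hM2.le.trans (Nat.le_mul_of_pos_right M hn), C, ?_,
    .of_forall_dvd hM0 hCc hCm ⟨M * s, by rw [iterate_mul]; exact hZC hs⟩ (fun s hs => ?_) hCdvd⟩
  · exact hCO.trans (iUnion_subset fun j => image_subset_iff.2 fun z hz =>
      (hP.iterate M).iterate j (hZP hz))
  · obtain ⟨j, z, hz, hzs⟩ := mem_iUnion.1 (hCO hs)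
    rw [← iterate_mul] at hzs
    have hmem := sub_mem_stabilizer_visitResidues hQ (fun r hr => hZQ r hr hz) hzs.symm
    refine (hM s).2 ?_
    rw [← sub_add_cancel (s : ZMod k) (M * j : ℕ)]
    exact add_mem hmem ((hM _).1 ⟨j, rfl⟩)

end

namespace IsReturnSet

variable {X : Type*} [TopologicalSpace X] {f : X → X} {x : X} {n k a : ℕ} {P C : Set X}

protected theorem comp (hP : IsReturnSet f x n P) (ha : f^[a] x ∈ P) (hn : 0 < n) (hk : 0 < k)
    (hC : IsReturnSet f^[n] (f^[a] x) k C) (hCP : C ⊆ P) : IsReturnSet f x (n * k) C := by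
  obtain ⟨b, hb⟩ := hC.visits
  have hmaps : MapsTo f^[n * k] C C := by rw [iterate_mul]; exact hC.mapsTo
  have htime : ∀ s, f^[s] x ∈ C → ∃ s', (f^[n])^[s'] (f^[a] x) ∈ C ∧
      s ≡ n * s' + a [MOD n * k] := by
    intro s hs
    have hshift : f^[n * k * a + s] x ∈ C := by
      rw [iterate_add_apply]
      exact mapsTo_iterate_mul hmaps a hs
    have hle : a ≤ n * k * a + s :=
      (Nat.le_mul_of_pos_left a (Nat.mul_pos hn hk)).trans (Nat.le_add_right _ _)
    obtain ⟨s', hs'⟩ := (Nat.modEq_iff_dvd' hle).1 (hP.modEq _ _ ha (hCP hshift))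
    have heq : n * s' + a = n * k * a + s := by omega
    refine ⟨s', ?_, ?_⟩
    · rwa [← iterate_mul, ← iterate_add_apply, heq]
    · rw [heq]
      simp [Nat.ModEq]
  refine ⟨hC.isPreconnected, hmaps, ⟨n * b + a, ?_⟩, fun s t hs ht => ?_⟩
  · rwa [iterate_add_apply, iterate_mul]
  · obtain ⟨s', hs', hss'⟩ := htime s hs
    obtain ⟨t', ht', htt'⟩ := htime t ht
    exact hss'.trans ((((hC.modEq s' t' hs' ht').mul_left' n).add_right a).trans htt'.symm)

protected theorem closure (hf : Continuous f) (hinj : Injective fun t => f^[t] x) (hn : 0 < n)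
    (hP : IsReturnSet f x n P) (hfin : (closure P \ P).Finite) :
    IsReturnSet f x n (closure P) := by
  have hmaps : MapsTo f^[n] (closure P) (closure P) := hP.mapsTo.closure (hf.iterate n)
  have hvisit : ∀ s, f^[s] x ∈ closure P → ∃ s', f^[s'] x ∈ P ∧ s ≡ s' [MOD n] := by
    intro s hs
    by_contra! hcon
    have hsub : range (fun j : ℕ => f^[n * j + s] x) ⊆ closure P \ P := by
      rintro _ ⟨j, rfl⟩
      refine ⟨?_, fun h => hcon _ h (by simp [Nat.ModEq])⟩
      dsimp only
      rw [iterate_add_apply]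
      exact mapsTo_iterate_mul hmaps j hs
    exact infinite_range_of_injective (hinj.comp
      ((add_left_injective s).comp (mul_right_injective₀ hn.ne'))) (hfin.subset hsub)
  refine ⟨hP.isPreconnected.closure, hmaps, hP.visits.imp fun _ h => subset_closure h, ?_⟩
  intro s t hs ht
  obtain ⟨s', hs', hss'⟩ := hvisit s hs
  obtain ⟨t', ht', htt'⟩ := hvisit t ht
  exact hss'.trans ((hP.modEq _ _ hs' ht').trans htt'.symm)

end IsReturnSet

section

variable {X : Type*} [TopologicalSpace X]

theorem EdgeAtlas.finite_closure_diff (𝒢 : EdgeAtlas X) {C : Set X} (hC : IsPreconnected C) :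
    (closure C \ C).Finite := by
  by_contra hinf
  obtain ⟨i, o, ho, hmono⟩ := 𝒢.exists_strictMono_coord hinf 3
  set e := 𝒢.chart i
  obtain ⟨u, hu, huC⟩ := mem_closure_iff.1 (ho 0).1.1 (e.coord ⁻¹' Iio (e.coord (o 1)))
    (isOpen_Iio.preimage e.continuous_coord) (hmono (by decide : (0 : Fin 3) < 1))
  obtain ⟨v, hv, hvC⟩ := mem_closure_iff.1 (ho 2).1.1 (e.coord ⁻¹' Ioi (e.coord (o 1)))
    (isOpen_Ioi.preimage e.continuous_coord) (hmono (by decide : (1 : Fin 3) < 2))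
  exact (ho 1).1.2 (e.isConvex_of_isPreconnected hC huC hvC (ho 1).2 (le_of_lt hu) (le_of_lt hv))

theorem EdgeAtlas.exists_isClosed_isReturnSet [CompactSpace X] [T2Space X] [PreconnectedSpace X]
    (𝒢 : EdgeAtlas X) {f : X → X} (hf : Continuous f) (hN : ¬ HasHorseshoe f) {x : X}
    (hω : (omegaLimitSet f x).Infinite) (K : ℕ) :
    ∃ n > K, ∃ P, IsClosed P ∧ IsReturnSet f x n P := by
  suffices h : ∃ n > K, ∃ P, IsReturnSet f x n P by
    obtain ⟨n, hn, P, hP⟩ := h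
    exact ⟨n, hn, closure P, isClosed_closure,
      hP.closure hf (injective_iterate_of_infinite_omegaLimitSet hω) (by omega)
        (𝒢.finite_closure_diff hP.isPreconnected)⟩
  induction K with
  | zero =>
    exact ⟨1, one_pos, univ, isPreconnected_univ, mapsTo_univ _ _, ⟨0, trivial⟩,
      fun _ _ _ _ => Nat.modEq_one⟩
  | succ K ih =>
    obtain ⟨n, hn, P, hP⟩ := ih
    have hn0 : 0 < n := by omega
    obtain ⟨a, ha⟩ := hP.visits
    obtain ⟨k, hk, C, hCP, hC⟩ := 𝒢.exists_isReturnSet_subset (hf.iterate n)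
      (fun h => hN (h.of_iterate hn0)) hP.isPreconnected hP.mapsTo ha
      (infinite_omegaLimitSet_iterate hf hω hn0 a)
    exact ⟨n * k, by nlinarith, C, hP.comp ha hn0 (by omega) hC hCP⟩

end

theorem exists_le_le_of_two_lt_card {ι α : Type*} [LinearOrder α] {S : Finset ι} (hS : 2 < S.card)
    (φ : ι → α) :
    ∃ a ∈ S, ∃ b ∈ S, ∃ c ∈ S, a ≠ b ∧ c ≠ b ∧ φ a ≤ φ b ∧ φ b ≤ φ c := by
  classical
  have hne : S.Nonempty := Finset.card_pos.1 (by omega)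
  obtain ⟨a, ha, hmin⟩ := S.exists_min_image φ hne
  obtain ⟨c, hc, hmax⟩ := S.exists_max_image φ hne
  obtain ⟨b, hb, hbac⟩ := Finset.exists_mem_notMem_of_card_lt_card
    (Finset.card_le_two.trans_lt hS : ({a, c} : Finset ι).card < S.card)
  simp only [Finset.mem_insert, Finset.mem_singleton, not_or] at hbac
  exact ⟨a, ha, b, hb, c, hc, Ne.symm hbac.1, Ne.symm hbac.2, hmin b hb, hmax b hb⟩

section

variable {X ι : Type*} [TopologicalSpace X] [DecidableEq ι] {s J : Finset ι} {B : ι → Set X}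

theorem exists_isPreconnected_biUnion_insert (hcl : ∀ i ∈ s, IsClosed (B i))
    (hpc : ∀ i ∈ s, IsPreconnected (B i)) (hne : ∀ i ∈ s, (B i).Nonempty)
    (hs : IsPreconnected (⋃ i ∈ s, B i)) (hJs : J ⊂ s) (hJ : IsPreconnected (⋃ i ∈ J, B i)) :
    ∃ i ∈ s \ J, IsPreconnected (⋃ j ∈ insert i J, B j) := by
  obtain ⟨i, his, hiJ⟩ := Finset.exists_of_ssubset hJs
  rcases J.eq_empty_or_nonempty with rfl | ⟨j, hj⟩
  · exact ⟨i, by simpa using his, by simpa using hpc i his⟩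
  have hmeet : ∀ {K}, K ⊆ s → ∀ k ∈ K, ((⋃ i ∈ s, B i) ∩ ⋃ i ∈ K, B i).Nonempty :=
    fun hK k hk => (hne k (hK hk)).mono
      (subset_inter (subset_biUnion_of_mem (hK hk)) (subset_biUnion_of_mem (u := B) hk))
  have hcover : ⋃ i ∈ s, B i ⊆ (⋃ i ∈ J, B i) ∪ ⋃ i ∈ s \ J, B i := by
    rw [← Finset.set_biUnion_union, Finset.union_sdiff_of_subset hJs.subset]
  obtain ⟨w, -, hwJ, hw⟩ := isPreconnected_closed_iff.1 hs _ _
    (isClosed_biUnion_finset fun i hi => hcl i (hJs.subset hi))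
    (isClosed_biUnion_finset fun i hi => hcl i (Finset.sdiff_subset hi)) hcover
    (hmeet hJs.subset j hj) (hmeet Finset.sdiff_subset i (Finset.mem_sdiff.2 ⟨his, hiJ⟩))
  obtain ⟨k, hk, hwk⟩ := mem_iUnion₂.1 hw
  refine ⟨k, hk, ?_⟩
  rw [Finset.set_biUnion_insert]
  exact (hpc k (Finset.sdiff_subset hk)).union w hwk hwJ hJ

theorem exists_isPreconnected_biUnion_erase (hnonempty : s.Nonempty)
    (hcl : ∀ i ∈ s, IsClosed (B i)) (hpc : ∀ i ∈ s, IsPreconnected (B i))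
    (hne : ∀ i ∈ s, (B i).Nonempty) (hs : IsPreconnected (⋃ i ∈ s, B i)) :
    ∃ i ∈ s, IsPreconnected (⋃ j ∈ s.erase i, B j) := by
  have hfin : {J | J ⊂ s ∧ IsPreconnected (⋃ j ∈ J, B j)}.Finite :=
    s.ssubsets.finite_toSet.subset fun J hJ => Finset.mem_coe.2 (Finset.mem_ssubsets.2 hJ.1)
  obtain ⟨J, ⟨hJs, hJ⟩, hmax⟩ := hfin.exists_maximal
    ⟨∅, Finset.empty_ssubset.2 hnonempty, by simpa using isPreconnected_empty⟩
  obtain ⟨i, hi, hins⟩ := exists_isPreconnected_biUnion_insert hcl hpc hne hs hJs hJ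
  obtain ⟨his, hiJ⟩ := Finset.mem_sdiff.1 hi
  have hsub : insert i J ⊆ s := Finset.insert_subset his hJs.subset
  have heq : insert i J = s := by
    by_contra hneq
    exact hiJ (hmax ⟨hsub.ssubset_of_ne hneq, hins⟩ (Finset.subset_insert i J)
      (Finset.mem_insert_self i J))
  exact ⟨i, his, by rwa [← heq, Finset.erase_insert hiJ]⟩

end

section

variable {X : Type*} [TopologicalSpace X]

theorem EdgeAtlas.exists_ge_mem_source (𝒢 : EdgeAtlas X) {z : ℕ → X} (hz : Injective z) {s : ℕ}
    [NeZero s] (T : ℕ) (c : ZMod s) :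
    ∃ t ≥ T, (t : ZMod s) = c ∧ ∃ i, z t ∈ (𝒢.chart i).source := by
  by_contra! hcon
  have hsub : range (fun u : ℕ => z (c.val + s * (T + u))) ⊆
      {w | ∀ i, w ∉ (𝒢.chart i).source} := by
    rintro _ ⟨u, rfl⟩
    refine hcon _ ?_ (by simp)
    calc T ≤ T + u := Nat.le_add_right _ _
      _ ≤ s * (T + u) := Nat.le_mul_of_pos_left _ (NeZero.pos s)
      _ ≤ c.val + s * (T + u) := Nat.le_add_left _ _
  exact infinite_range_of_injective (hz.comp ((add_right_injective c.val).comp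
    ((mul_right_injective₀ (NeZero.ne s)).comp (add_right_injective T))))
    (𝒢.finite_vertices.subset hsub)

theorem EdgeAtlas.le_two_mul_card_of_forall_exists_isPreconnected (𝒢 : EdgeAtlas X) {z : ℕ → X}
    (hz : Injective z) {s : ℕ} [NeZero s]
    (hC : ∀ c : ZMod s, ∃ C, IsPreconnected C ∧
      ∀ᶠ t : ℕ in atTop, z t ∈ C ↔ (t : ZMod s) ≠ c) :
    s ≤ 2 * 𝒢.card := by
  choose C hCc hev using hC
  obtain ⟨T, hT⟩ := eventually_atTop.1 (eventually_all.2 hev)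
  choose τ hτ hres i hi using 𝒢.exists_ge_mem_source hz (s := s) T
  have hmem : ∀ b c, z (τ c) ∈ C b ↔ c ≠ b := fun b c => by rw [hT _ (hτ c), hres]
  by_contra! hlt
  obtain ⟨j, hj⟩ := Fintype.exists_lt_card_fiber_of_mul_lt_card i (n := 2)
    (by rwa [Fintype.card_fin, ZMod.card, mul_comm])
  obtain ⟨a, -, b, hb, c, -, hab, hcb, hle, hle'⟩ :=
    exists_le_le_of_two_lt_card hj fun c => (𝒢.chart j).coord (z (τ c))
  obtain rfl : i b = j := (Finset.mem_filter.1 hb).2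
  exact (hmem b b).1 (EdgeChart.isConvex_of_isPreconnected (hCc b) ((hmem b a).2 hab)
    ((hmem b c).2 hcb) (hi b) hle hle') rfl

end

namespace IsReturnSet

variable {X : Type*} [TopologicalSpace X] {f : X → X} {x : X} {N s a : ℕ} {P : Set X}

theorem iterate (hN : N ≠ 0) (hP : IsReturnSet f x (N * s) P) (ha : f^[a] x ∈ P) :
    IsReturnSet f^[N] (f^[a] x) s P := by
  refine ⟨hP.isPreconnected, by rw [← iterate_mul]; exact hP.mapsTo, ⟨0, ha⟩, fun i j hi hj => ?_⟩
  rw [← iterate_mul, ← iterate_add_apply] at hi hj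
  exact ((hP.modEq _ _ hi hj).add_right_cancel' a).mul_left_cancel' hN

theorem iterate_mem_image_iff [NeZero s] (hP : IsReturnSet f x s P) (hx : x ∈ P) {t i : ℕ}
    (hit : i ≤ t) : f^[t] x ∈ f^[i] '' P ↔ (t : ZMod s) = i := by
  refine ⟨fun h => ?_, fun h => ?_⟩
  · obtain ⟨r, hr, hrs⟩ := sub_mem_visitResidues_of_mem_image (NeZero.pos s) hP.mapsTo h
    have hr0 := (ZMod.natCast_eq_natCast_iff r 0 s).2 (hP.modEq r 0 hr hx)
    rwa [hrs, Nat.cast_zero, sub_eq_zero] at hr0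
  · obtain ⟨d, hd⟩ := (Nat.modEq_iff_dvd' hit).1 ((ZMod.natCast_eq_natCast_iff _ _ _).1 h.symm)
    refine ⟨f^[s * d] x, mapsTo_iterate_mul hP.mapsTo d hx, ?_⟩
    rw [← iterate_add_apply, ← hd, Nat.add_sub_cancel' hit]

theorem exists_isPreconnected_eventually_mem_iff [CompactSpace X] [T2Space X] [NeZero s]
    (hf : Continuous f) (hP : IsReturnSet f x s P) (hPcl : IsClosed P) (hx : x ∈ P)
    (hU : IsPreconnected (⋃ j ∈ Finset.range s, f^[j] '' P)) (c : ZMod s) :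
    ∃ C, IsPreconnected C ∧ ∀ᶠ t : ℕ in atTop, f^[t] x ∈ C ↔ (t : ZMod s) ≠ c := by
  obtain ⟨j₀, hj₀, hC⟩ := exists_isPreconnected_biUnion_erase
    (Finset.nonempty_range_iff.2 (NeZero.ne s))
    (fun j _ => (hPcl.isCompact.image (hf.iterate j)).isClosed)
    (fun j _ => hP.isPreconnected.image _ (hf.iterate j).continuousOn)
    (fun j _ => ⟨_, mem_image_of_mem _ hx⟩) hU
  rw [Finset.mem_range] at hj₀
  set d := (c - j₀).val
  refine ⟨_, hC.image f^[d] (hf.iterate d).continuousOn, ?_⟩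
  filter_upwards [eventually_ge_atTop (d + s)] with t ht
  have himage : ∀ j < s, f^[t] x ∈ f^[d] '' (f^[j] '' P) ↔ (t : ZMod s) = c - j₀ + j := by
    intro j hj
    rw [← image_comp, ← iterate_add, hP.iterate_mem_image_iff hx (by omega), Nat.cast_add,
      ZMod.natCast_zmod_val]
  simp only [image_iUnion, mem_iUnion, exists_prop, Finset.mem_erase, Finset.mem_range]
  constructor
  · rintro ⟨j, ⟨hne, hj⟩, hmem⟩ htc
    rw [himage j hj, htc, sub_add_eq_add_sub, eq_sub_iff_add_eq, add_right_inj,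
      ZMod.natCast_eq_natCast_iff] at hmem
    exact hne (hmem.eq_of_lt_of_lt hj₀ hj).symm
  · intro htc
    refine ⟨((t : ZMod s) - (c - j₀)).val, ⟨fun h => ?_, ZMod.val_lt _⟩,
      (himage _ (ZMod.val_lt _)).2 ?_⟩
    · have hj₀c := congrArg (Nat.cast : ℕ → ZMod s) h
      rw [ZMod.natCast_zmod_val, sub_eq_iff_eq_add, add_sub_cancel] at hj₀c
      exact htc hj₀c
    · rw [ZMod.natCast_zmod_val, add_sub_cancel]

theorem exists_isClosed_component [CompactSpace X] [T2Space X] (𝒢 : EdgeAtlas X)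
    (hf : Continuous f) {n : ℕ} (hn : 0 < n) (hP : IsReturnSet f x n P) (hPcl : IsClosed P)
    (hinj : Injective fun t => f^[t] x) (ha : f^[a] x ∈ P) :
    ∃ N, n ≤ N * (2 * 𝒢.card) ∧ ∃ C, IsClosed C ∧ IsPreconnected C ∧ MapsTo f^[N] C C ∧
      f^[a] x ∈ C ∧ ∀ i, ∀ w ∈ C, f^[i] w ∈ C → N ∣ i := by
  obtain ⟨C, N, hN, hPC, hCO, hC, hCm, hdvd⟩ :=
    exists_isPreconnected_mapsTo_forall_dvd hf hP.isPreconnected ha hn (hP.mapsTo ha)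
  obtain ⟨s, rfl⟩ := hdvd n _ (hPC ha) (hPC (hP.mapsTo ha))
  have : NeZero s := ⟨by rintro rfl; exact hn.ne' (mul_zero N)⟩
  have hPs := hP.iterate hN.ne' ha
  have hCU : C = ⋃ j ∈ Finset.range s, (f^[N])^[j] '' P := by
    refine Subset.antisymm (fun w hw => ?_) (iUnion₂_subset fun j _ => image_subset_iff.2
      fun p hp => hCm.iterate j (hPC hp))
    obtain ⟨j, p, hp, rfl⟩ := mem_iUnion.1 (hCO hw)
    obtain ⟨i, rfl⟩ := hdvd j p (hPC hp) hw
    refine mem_iUnion₂.2 ⟨i % s, Finset.mem_range.2 (Nat.mod_lt _ (NeZero.pos s)),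
      (f^[N])^[s * (i / s)] p, mapsTo_iterate_mul hPs.mapsTo _ hp, ?_⟩
    rw [← iterate_add_apply, Nat.mod_add_div, ← iterate_mul]
  refine ⟨N, Nat.mul_le_mul_left N (𝒢.le_two_mul_card_of_forall_exists_isPreconnected
    (z := fun t => (f^[N])^[t] (f^[a] x)) ?_ (hPs.exists_isPreconnected_eventually_mem_iff
      (hf.iterate N) hPcl ha (hCU ▸ hC))), C, ?_, hC, hCm, hPC ha, hdvd⟩
  · simp only [← iterate_mul, ← iterate_add_apply]
    exact hinj.comp ((add_left_injective a).comp (mul_right_injective₀ hN.ne'))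
  · rw [hCU]
    exact isClosed_biUnion_finset fun j _ =>
      (hPcl.isCompact.image ((hf.iterate N).iterate j)).isClosed

end IsReturnSet

theorem modEq_of_iterate_eq {X : Type*} {f : X → X} {N : ℕ} (hN : 0 < N) {C : Set X}
    (hC : MapsTo f^[N] C C) (hdvd : ∀ i, ∀ w ∈ C, f^[i] w ∈ C → N ∣ i) {p q : X}
    (hp : p ∈ C) (hq : q ∈ C) {i j : ℕ} (h : f^[i] p = f^[j] q) : i ≡ j [MOD N] := by
  have hj : (N - 1) * j + j = N * j := by
    rw [← Nat.succ_mul, Nat.succ_eq_add_one, Nat.sub_add_cancel hN]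
  have hmem : f^[(N - 1) * j + i] p ∈ C := by
    rw [iterate_add_apply, h, ← iterate_add_apply, hj]
    exact mapsTo_iterate_mul hC j hq
  have hmod := (Nat.modEq_zero_iff_dvd.2 (hdvd _ p hp hmem)).add_right j
  rw [zero_add, add_right_comm, hj] at hmod
  exact Nat.ModEq.trans (by simp [Nat.ModEq]) hmod

section Cycles

variable {X : Type*} [TopologicalSpace X] {f : X → X} {x : X} {M N : ℕ} {E E' : ℕ → Set X} {t : ℕ}

/-- A cycle of `N` disjoint closed sets, each mapped by `f` into the next, absorbing the orbit of
`x`. The sets are indexed by time rather than by residues modulo `N`, and only decrease after each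
turn, so that intersecting two cycles requires no reindexing. Of connectedness only the convexity
along edges is kept, which passes to intersections. -/
structure IsCycle (f : X → X) (x : X) (N : ℕ) (E : ℕ → Set X) : Prop where
  pos : 0 < N
  isClosed : ∀ t, IsClosed (E t)
  isConvex : ∀ t (e : EdgeChart X), e.IsConvex (E t)
  mapsTo : ∀ t, MapsTo f (E t) (E (t + 1))
  add_subset : ∀ t, E (t + N) ⊆ E t
  modEq : ∀ s t z, z ∈ E s → z ∈ E t → s ≡ t [MOD N]
  visits : ∀ t, ∀ᶠ j in atTop, f^[t + N * j] x ∈ E t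

theorem isCycle_iterate_image [CompactSpace X] [T2Space X] (hf : Continuous f) (hN : 0 < N)
    {C : Set X} (hCcl : IsClosed C) (hC : IsPreconnected C) (hCm : MapsTo f^[N] C C)
    (hdvd : ∀ i, ∀ w ∈ C, f^[i] w ∈ C → N ∣ i) {a : ℕ} (ha : f^[a] x ∈ C) :
    IsCycle f x N fun t => f^[t + (N - 1) * a] '' C where
  pos := hN
  isClosed t := (hCcl.isCompact.image (hf.iterate _)).isClosed
  isConvex t e := EdgeChart.isConvex_of_isPreconnected (hC.image _ (hf.iterate _).continuousOn)
  mapsTo t := by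
    rintro _ ⟨p, hp, rfl⟩
    exact ⟨p, hp, by rw [add_right_comm, iterate_succ_apply']⟩
  add_subset t := by
    rintro _ ⟨p, hp, rfl⟩
    exact ⟨f^[N] p, hCm hp, by rw [← iterate_add_apply, add_right_comm]⟩
  modEq s t z := by
    rintro ⟨p, hp, rfl⟩ ⟨q, hq, hqp⟩
    exact (modEq_of_iterate_eq hN hCm hdvd hp hq hqp.symm).add_right_cancel' _
  visits t := by
    filter_upwards [eventually_ge_atTop a] with j hj
    refine ⟨f^[N * (j - a)] (f^[a] x), mapsTo_iterate_mul hCm _ ha, ?_⟩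
    rw [← iterate_add_apply, ← iterate_add_apply]
    congr 1
    obtain ⟨d, rfl⟩ := Nat.exists_eq_add_of_le hj
    obtain ⟨n, rfl⟩ := Nat.exists_eq_add_of_le' hN
    simp only [Nat.add_sub_cancel, Nat.add_sub_cancel_left]
    ring

theorem EdgeAtlas.exists_isCycle [CompactSpace X] [T2Space X] [PreconnectedSpace X]
    (𝒢 : EdgeAtlas X) (hf : Continuous f) (hS : ¬ HasHorseshoe f)
    (hω : (omegaLimitSet f x).Infinite) (K : ℕ) : ∃ N > K, ∃ E, IsCycle f x N E := by
  obtain ⟨n, hn, P, hPcl, hP⟩ := 𝒢.exists_isClosed_isReturnSet hf hS hω (K * (2 * 𝒢.card))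
  obtain ⟨a, ha⟩ := hP.visits
  obtain ⟨N, hnN, C, hCcl, hC, hCm, haC, hdvd⟩ := hP.exists_isClosed_component 𝒢 hf (by omega) hPcl
    (injective_iterate_of_infinite_omegaLimitSet hω) ha
  have hKN : K < N := Nat.lt_of_mul_lt_mul_right (hn.trans_le hnN)
  exact ⟨N, hKN, _, isCycle_iterate_image hf (by omega) hCcl hC hCm hdvd haC⟩

namespace IsCycle

theorem add_mul_subset (h : IsCycle f x N E) (t k : ℕ) : E (t + N * k) ⊆ E t := by
  induction k with
  | zero => exact Subset.rfl
  | succ k ih =>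
    rw [Nat.mul_succ, ← add_assoc]
    exact (h.add_subset _).trans ih

theorem eventually_mem_of_dvd (h : IsCycle f x N E) (hM : 0 < M) (hNM : N ∣ M) (t : ℕ) :
    ∀ᶠ j in atTop, f^[t + M * j] x ∈ E t := by
  obtain ⟨k, rfl⟩ := hNM
  have hk : 0 < k := Nat.pos_of_mul_pos_left hM
  simp only [mul_assoc]
  exact (strictMono_mul_left_of_pos hk).tendsto_atTop.eventually (h.visits t)

theorem inter (h : IsCycle f x N E) (h' : IsCycle f x M E') :
    IsCycle f x (N.lcm M) fun t => E t ∩ E' t where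
  pos := Nat.lcm_pos h.pos h'.pos
  isClosed t := (h.isClosed t).inter (h'.isClosed t)
  isConvex t e _ _ _ hu hv hw huw hwv :=
    ⟨h.isConvex t e hu.1 hv.1 hw huw hwv, h'.isConvex t e hu.2 hv.2 hw huw hwv⟩
  mapsTo t _ hz := ⟨h.mapsTo t hz.1, h'.mapsTo t hz.2⟩
  add_subset t := by
    obtain ⟨k, hk⟩ := Nat.dvd_lcm_left N M
    obtain ⟨k', hk'⟩ := Nat.dvd_lcm_right N M
    exact inter_subset_inter (hk ▸ h.add_mul_subset t k) (hk' ▸ h'.add_mul_subset t k')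
  modEq s t z hs ht := Nat.mod_lcm (h.modEq s t z hs.1 ht.1) (h'.modEq s t z hs.2 ht.2)
  visits t :=
    (h.eventually_mem_of_dvd (Nat.lcm_pos h.pos h'.pos) (Nat.dvd_lcm_left N M) t).and
      (h'.eventually_mem_of_dvd (Nat.lcm_pos h.pos h'.pos) (Nat.dvd_lcm_right N M) t)

theorem exists_refinement (hcyc : ∀ K, ∃ N > K, ∃ E, IsCycle f x N E) (h : IsCycle f x N E)
    (K : ℕ) : ∃ q > K, ∃ E', IsCycle f x (N * q) E' ∧ ∀ t, E' t ⊆ E t := by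
  obtain ⟨N', hN', E', h'⟩ := hcyc (N * K)
  obtain ⟨q, hq⟩ := Nat.dvd_lcm_left N N'
  have hNq : N * K < N * q :=
    hq ▸ hN'.trans_le (Nat.le_of_dvd (Nat.lcm_pos h.pos h'.pos) (Nat.dvd_lcm_right N N'))
  exact ⟨q, Nat.lt_of_mul_lt_mul_left hNq, _, hq ▸ h.inter h', fun t => inter_subset_left⟩

theorem mapsTo_iterate (h : IsCycle f x N E) (t k : ℕ) : MapsTo f^[k] (E t) (E (t + k)) := by
  induction k with
  | zero => exact mapsTo_id _
  | succ k ih =>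
    rw [iterate_succ']
    exact (h.mapsTo _).comp ih

theorem infinite (h : IsCycle f x N E) (hinj : Injective fun t => f^[t] x) (t : ℕ) :
    (E t).Infinite := by
  obtain ⟨J, hJ⟩ := eventually_atTop.1 (h.visits t)
  refine ((Ici_infinite J).image (f := fun j => f^[t + N * j] x) ?_).mono (image_subset_iff.2 hJ)
  exact (hinj.comp ((add_right_injective t).comp (mul_right_injective₀ h.pos.ne'))).injOn

theorem omegaLimitSet_inter_nonempty [CompactSpace X] (h : IsCycle f x N E) (t : ℕ) :
    (omegaLimitSet f x ∩ E t).Nonempty := by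
  obtain ⟨z, hz, hcluster⟩ := (h.isClosed t).isCompact.exists_mapClusterPt_of_frequently
    (h.visits t).frequently
  have htend : Tendsto (fun j => t + N * j) atTop atTop :=
    ((strictMono_mul_left_of_pos h.pos).const_add t).tendsto_atTop
  exact ⟨z, mem_omegaLimitSet_iff_mapClusterPt.2 (hcluster.of_comp htend), hz⟩

end IsCycle

end Cycles

theorem sum_sub_le_of_pairwiseDisjoint_Icc {ι : Type*} {S : Finset ι} {u v : ι → ℝ} {a b : ℝ}
    (hab : a ≤ b) (hd : (S : Set ι).PairwiseDisjoint fun i => Icc (u i) (v i))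
    (hsub : ∀ i ∈ S, Icc (u i) (v i) ⊆ Icc a b) : ∑ i ∈ S, (v i - u i) ≤ b - a := by
  calc ∑ i ∈ S, (v i - u i)
      ≤ ∑ i ∈ S, MeasureTheory.volume.real (Icc (u i) (v i)) :=
        Finset.sum_le_sum fun i _ => by rw [Real.volume_real_Icc]; exact le_max_left _ _
    _ = MeasureTheory.volume.real (⋃ i ∈ S, Icc (u i) (v i)) :=
        (MeasureTheory.measureReal_biUnion_finset hd (fun _ _ => measurableSet_Icc)
          fun _ _ => measure_Icc_lt_top.ne).symm
    _ ≤ MeasureTheory.volume.real (Icc a b) :=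
        MeasureTheory.measureReal_mono (iUnion₂_subset hsub) measure_Icc_lt_top.ne
    _ = b - a := Real.volume_real_Icc_of_le hab

section

variable {X : Type*} [TopologicalSpace X]

theorem EdgeChart.IsConvex.isArc [T2Space X] {e : EdgeChart X} {C : Set X} (hC : e.IsConvex C)
    (hcompact : IsCompact C) (hsource : C ⊆ e.source) (hC2 : C.Nontrivial) : IsArc C := by
  obtain ⟨u, hu, humin⟩ := hcompact.exists_isMinOn hC2.nonempty e.continuous_coord.continuousOn
  obtain ⟨v, hv, hvmax⟩ := hcompact.exists_isMaxOn hC2.nonempty e.continuous_coord.continuousOn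
  have huv : e.coord u < e.coord v := by
    by_contra! hle
    have heq : ∀ z ∈ C, z = u := fun z hz =>
      EdgeChart.eq_of_coord_eq (hsource hu) (le_antisymm ((hvmax hz).trans hle) (humin hz))
    exact hC2.not_subset_singleton heq
  have hIcc : Icc (e.coord u) (e.coord v) ⊆ Ioo 0 1 :=
    Icc_subset_Ioo (hsource hu).1 (hsource hv).2
  have himage : C = e.param '' Icc (e.coord u) (e.coord v) := by
    rw [EdgeChart.image_param hIcc]
    exact Subset.antisymm (fun z hz => ⟨humin hz, hvmax hz⟩)
      fun z hz => hC hu hv (hIcc hz) hz.1 hz.2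
  have hinj : InjOn e.param (Icc (e.coord u) (e.coord v)) := fun r hr s hs h => by
    rw [← e.coord_param r (hIcc hr), h, e.coord_param s (hIcc hs)]
  have hemb : IsClosedEmbedding fun r : Icc (e.coord u) (e.coord v) => e.param r :=
    (e.continuous_param.comp continuous_subtype_val).isClosedEmbedding hinj.injective
  rw [himage, image_eq_range]
  exact ⟨hemb.isEmbedding.toHomeomorph.symm.trans (iccHomeoI _ _ huv)⟩

theorem EdgeAtlas.card_le_two_mul_card (𝒢 : EdgeAtlas X) {ι : Type*} {S : Finset ι}
    {C : ι → Set X} (hd : (S : Set ι).PairwiseDisjoint C)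
    (hconv : ∀ j ∈ S, ∀ i, (𝒢.chart i).IsConvex (C j))
    (hC : ∀ j ∈ S, ∃ i, (C j ∩ (𝒢.chart i).source).Nonempty ∧ ¬ C j ⊆ (𝒢.chart i).source) :
    S.card ≤ 2 * 𝒢.card := by
  rcases S.eq_empty_or_nonempty with rfl | ⟨j₀, hj₀⟩
  · exact Nat.zero_le _
  obtain ⟨i₀, ⟨z₀, -⟩, -⟩ := hC j₀ hj₀
  have : Nonempty (Fin 𝒢.card) := ⟨i₀⟩
  have : Nonempty X := ⟨z₀⟩
  choose! i hmeet hnot using hC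
  choose! u hu using hmeet
  by_contra! hlt
  obtain ⟨k, -, hk⟩ := Finset.exists_lt_card_fiber_of_mul_lt_card_of_maps_to (f := i) (n := 2)
    (fun j _ => Finset.mem_univ (i j)) (by rwa [Finset.card_fin, mul_comm])
  obtain ⟨a, ha, b, hb, c, hc, hab, hcb, hle, hle'⟩ :=
    exists_le_le_of_two_lt_card hk fun j => (𝒢.chart k).coord (u j)
  simp only [Finset.mem_filter] at ha hb hc
  obtain ⟨hb, rfl⟩ := hb
  obtain ⟨v, hv, hvs⟩ := not_subset.1 (hnot b hb)
  have hua : u a ∈ (𝒢.chart (i b)).source := ha.2 ▸ (hu a ha.1).2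
  have huc : u c ∈ (𝒢.chart (i b)).source := hc.2 ▸ (hu c hc.1).2
  rcases le_or_gt ((𝒢.chart (i b)).coord v) 0 with hv0 | hv0
  · exact disjoint_left.1 (hd ha.1 hb hab) (hu a ha.1).1
      (hconv b hb _ hv (hu b hb).1 hua (hv0.trans hua.1.le) hle)
  · have hv1 : 1 ≤ (𝒢.chart (i b)).coord v := not_lt.1 fun h => hvs ⟨hv0, h⟩
    exact disjoint_left.1 (hd hc.1 hb hcb) (hu c hc.1).1
      (hconv b hb _ (hu b hb).1 hv huc hle' (huc.2.le.trans hv1))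

end

namespace IsCycle

variable {X : Type*} [TopologicalSpace X] {f : X → X} {x : X} {N : ℕ} {E : ℕ → Set X} {t : ℕ}
  {e : EdgeChart X}

theorem isPeriodicArc [CompactSpace X] [T2Space X] (h : IsCycle f x N E)
    (hinj : Injective fun t => f^[t] x) (hE : E t ⊆ e.source) : IsPeriodicArc f (E t) N := by
  refine ⟨(h.isConvex t e).isArc (h.isClosed t).isCompact hE (h.infinite hinj t).nontrivial,
    h.pos, (h.mapsTo_iterate t N).mono_right (h.add_subset t), fun i j hij hj => ?_⟩
  refine disjoint_left.2 fun z hzi hzj => hij.ne ?_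
  have hmod := h.modEq _ _ z ((h.mapsTo_iterate t i).image_subset hzi)
    ((h.mapsTo_iterate t j).image_subset hzj)
  exact (hmod.add_left_cancel' t).eq_of_lt_of_lt (hij.trans hj) hj

theorem exists_subset_forall_sub_lt (hcyc : ∀ K, ∃ N > K, ∃ E, IsCycle f x N E)
    (h : IsCycle f x N E) (hE : E t ⊆ e.source) {ε : ℝ} (hε : 0 < ε) :
    ∃ N' E' t', IsCycle f x N' E' ∧ E' t' ⊆ E t ∧
      ∀ u ∈ E' t', ∀ v ∈ E' t', e.coord v - e.coord u < ε := by
  obtain ⟨q, hq, E', h', hsub⟩ := h.exists_refinement hcyc ⌊1 / ε⌋₊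
  by_contra! hcon
  have hEt : ∀ j, E' (t + N * j) ⊆ E t := fun j => (hsub _).trans (h.add_mul_subset t j)
  choose u hu v hv huv using fun j => hcon _ E' (t + N * j) h' (hEt j)
  have hIoo : ∀ j, Icc (e.coord (u j)) (e.coord (v j)) ⊆ Ioo 0 1 := fun j =>
    Icc_subset_Ioo (hE (hEt j (hu j))).1 (hE (hEt j (hv j))).2
  have hd : (Finset.range q : Set ℕ).PairwiseDisjoint
      fun j => Icc (e.coord (u j)) (e.coord (v j)) := by
    intro i hi j hj hij
    refine disjoint_left.2 fun r hri hrj => hij ?_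
    have hmem : ∀ {k}, r ∈ Icc (e.coord (u k)) (e.coord (v k)) → e.param r ∈ E' (t + N * k) := by
      intro k hr
      have hcoord := e.coord_param r (hIoo k hr)
      exact h'.isConvex _ e (hu k) (hv k) (hcoord.symm ▸ hIoo k hr : e.coord (e.param r) ∈ Ioo 0 1)
        (hcoord.symm ▸ hr.1) (hcoord.symm ▸ hr.2)
    have hmod := (h'.modEq _ _ _ (hmem hri) (hmem hrj)).add_left_cancel' t
    exact (hmod.mul_left_cancel' h.pos.ne').eq_of_lt_of_lt (Finset.mem_range.1 hi)
      (Finset.mem_range.1 hj)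
  have hlength : q * ε ≤ 1 := by
    calc q * ε = ∑ _j ∈ Finset.range q, ε := by simp
      _ ≤ ∑ j ∈ Finset.range q, (e.coord (v j) - e.coord (u j)) :=
        Finset.sum_le_sum fun j _ => huv j
      _ ≤ 1 - 0 := sum_sub_le_of_pairwiseDisjoint_Icc zero_le_one hd
        fun j _ => (hIoo j).trans Ioo_subset_Icc_self
      _ = 1 := sub_zero 1
  exact absurd ((Nat.floor_lt (by positivity)).1 hq) (by rw [not_lt, le_div_iff₀ hε]; exact hlength)

theorem exists_seq_isPeriodicArc [CompactSpace X] [T2Space X]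
    (hcyc : ∀ K, ∃ N > K, ∃ E, IsCycle f x N E) (hinj : Injective fun t => f^[t] x)
    (h : IsCycle f x N E) (hE : E t ⊆ e.source) :
    ∃ C : ℕ → Set X, C 0 = E t ∧ (∀ n, C (n + 1) ⊆ C n) ∧
      (∀ n, ∃ s, IsPeriodicArc f (C n) s) ∧ (∀ n, IsClosed (C n)) ∧
      (∀ n, (omegaLimitSet f x ∩ C n).Nonempty) ∧
      ∀ n, ∀ u ∈ C (n + 1), ∀ v ∈ C (n + 1), e.coord v - e.coord u < 1 / ((n : ℝ) + 1) := by
  let IsPiece : Set X → Prop := fun C => C ⊆ E t ∧ ∃ N E t, IsCycle f x N E ∧ E t = C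
  have hstep : ∀ C, IsPiece C → ∀ n : ℕ, ∃ C', IsPiece C' ∧ C' ⊆ C ∧
      ∀ u ∈ C', ∀ v ∈ C', e.coord v - e.coord u < 1 / ((n : ℝ) + 1) := by
    rintro _ ⟨hC, M, F, s, hF, rfl⟩ n
    obtain ⟨N', E', t', h', hsub, hsmall⟩ :=
      hF.exists_subset_forall_sub_lt hcyc (hC.trans hE) n.one_div_pos_of_nat
    exact ⟨E' t', ⟨hsub.trans hC, N', E', t', h', rfl⟩, hsub, hsmall⟩
  choose! next hpiece hsub hsmall using hstep
  let C : ℕ → Set X := fun n => n.rec (E t) fun n C => next C n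
  have hC : ∀ n, IsPiece (C n) := fun n => by
    induction n with
    | zero => exact ⟨Subset.rfl, N, E, t, h, rfl⟩
    | succ n ih => exact hpiece _ ih n
  refine ⟨C, rfl, fun n => hsub _ (hC n) n, ?_, ?_, ?_, fun n => hsmall _ (hC n) n⟩ <;>
    intro n <;> obtain ⟨hn, M, F, s, hF, hs⟩ := hC n <;> rw [← hs] at hn ⊢
  · exact ⟨M, hF.isPeriodicArc hinj (hn.trans hE)⟩
  · exact hF.isClosed s
  · exact hF.omegaLimitSet_inter_nonempty s

theorem exists_mem_omegaLimitSet_sInter_eq_singleton [CompactSpace X] [T2Space X]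
    (hcyc : ∀ K, ∃ N > K, ∃ E, IsCycle f x N E) (hinj : Injective fun t => f^[t] x)
    (h : IsCycle f x N E) (hE : E t ⊆ e.source) :
    ∃ a ∈ omegaLimitSet f x, a ∈ E t ∧ ⋂₀ {I | (∃ s, IsPeriodicArc f I s) ∧ a ∈ I} = {a} := by
  obtain ⟨C, hC0, hanti, harc, hclosed, hω, hsmall⟩ := h.exists_seq_isPeriodicArc hcyc hinj hE
  have hclosedω : ∀ n, IsClosed (omegaLimitSet f x ∩ C n) :=
    fun n => isClosed_omegaLimitSet.inter (hclosed n)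
  obtain ⟨a, ha⟩ := IsCompact.nonempty_iInter_of_sequence_nonempty_isCompact_isClosed
    (fun n => omegaLimitSet f x ∩ C n) (fun n => inter_subset_inter_right _ (hanti n)) hω
    (hclosedω 0).isCompact hclosedω
  rw [mem_iInter] at ha
  have haC : ∀ n, a ∈ C n := fun n => (ha n).2
  have hcoord : ∀ {u v}, (∀ n, u ∈ C n) → (∀ n, v ∈ C n) → e.coord v ≤ e.coord u := by
    intro u v hu hv
    by_contra! hlt
    obtain ⟨n, hn⟩ := exists_nat_one_div_lt (sub_pos.2 hlt)
    exact (hsmall n u (hu (n + 1)) v (hv (n + 1))).not_gt hn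
  refine ⟨a, (ha 0).1, hC0 ▸ haC 0, Subset.antisymm (fun b hb => ?_) ?_⟩
  · have hbC : ∀ n, b ∈ C n := fun n => hb _ ⟨harc n, haC n⟩
    exact EdgeChart.eq_of_coord_eq (hE (hC0 ▸ haC 0))
      (le_antisymm (hcoord haC hbC) (hcoord hbC haC))
  · rintro _ rfl I hI
    exact hI.2

end IsCycle

theorem EdgeAtlas.infinite_sInter_eq_singleton {X : Type*} [TopologicalSpace X] [CompactSpace X]
    [T2Space X] [PreconnectedSpace X] (𝒢 : EdgeAtlas X) {f : X → X} (hf : Continuous f)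
    (hS : ¬ HasHorseshoe f) {x : X} (hω : (omegaLimitSet f x).Infinite) :
    {a ∈ omegaLimitSet f x |
      ⋂₀ {I | (∃ s, IsPeriodicArc f I s) ∧ a ∈ I} = {a}}.Infinite := by
  classical
  intro hfin
  have hinj := injective_iterate_of_infinite_omegaLimitSet hω
  have hcyc := 𝒢.exists_isCycle hf hS hω
  set A := hfin.toFinset
  obtain ⟨N, hN, E, h⟩ := hcyc (2 * 𝒢.card + A.card)
  have hd : ((Finset.range N : Finset ℕ) : Set ℕ).PairwiseDisjoint E := fun s hs t ht hst =>
    disjoint_left.2 fun z hzs hzt => hst ((h.modEq s t z hzs hzt).eq_of_lt_of_lt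
      (Finset.mem_range.1 hs) (Finset.mem_range.1 ht))
  have hgood : ((Finset.range N).filter fun t => ∃ a ∈ A, a ∈ E t).card ≤ A.card := by
    have hchoice : ∀ t ∈ (Finset.range N).filter fun t => ∃ a ∈ A, a ∈ E t, ∃ a ∈ A, a ∈ E t :=
      fun t ht => (Finset.mem_filter.1 ht).2
    have : Nonempty X := ⟨x⟩
    choose! a haA haE using hchoice
    refine Finset.card_le_card_of_injOn a haA fun s hs t ht hst => hd.elim
      (Finset.mem_of_mem_filter s hs) (Finset.mem_of_mem_filter t ht)
      (not_disjoint_iff.2 ⟨a s, haE s hs, hst ▸ haE t ht⟩)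
  have hbad : ((Finset.range N).filter fun t => ¬ ∃ a ∈ A, a ∈ E t).card ≤ 2 * 𝒢.card := by
    refine 𝒢.card_le_two_mul_card (hd.subset (Finset.coe_subset.2 (Finset.filter_subset _ _)))
      (fun t _ i => h.isConvex t _) fun t ht => ?_
    obtain ⟨z, hz, hzv⟩ := (h.infinite hinj t).exists_notMem_finite 𝒢.finite_vertices
    obtain ⟨i, hi⟩ := not_forall_not.1 hzv
    refine ⟨i, ⟨z, hz, hi⟩, fun hE => (Finset.mem_filter.1 ht).2 ?_⟩
    obtain ⟨a, haω, haE, ha⟩ := h.exists_mem_omegaLimitSet_sInter_eq_singleton hcyc hinj hE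
    exact ⟨a, hfin.mem_toFinset.2 ⟨haω, ha⟩, haE⟩
  have hcard := Finset.card_filter_add_card_filter_not (s := Finset.range N)
    fun t => ∃ a ∈ A, a ∈ E t
  rw [Finset.card_range] at hcard
  omega

/-- For a zero entropy tree map, infinitely many points `a` of an infinite
ω-limit set satisfy: the intersection of all periodic arcs containing `a` reduces to `{a}`. -/
theorem infinite_points_with_singleton_arc_intersection {X : Type*} [MetricSpace X]
    (hX : IsTree X) (f : X → X) (hf : Continuous f) (h0 : topEntropy f = 0) (x : X)
    (hx : (omegaLimitSet f x).Infinite) :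
    { a ∈ omegaLimitSet f x |
      ⋂₀ { I | (∃ s, IsPeriodicArc f I s) ∧ a ∈ I } = {a} }.Infinite := by
  have := hX.1
  have := hX.2.1
  obtain ⟨𝒢⟩ := hX.nonempty_edgeAtlas
  exact 𝒢.infinite_sInter_eq_singleton hf (not_hasHorseshoe_of_topEntropy_eq_zero h0) hx
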